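/- arXiv:1304.5775 — 2 statements merged into one kernel-verified Lean document; each statement's English description precedes it below -/
import Mathlib

section
/- Let Z = {P₁,…,P_s} be a finite set of distinct points of X = ℙ¹×ℙ¹ with radical ideal I. If α*(I^{(m)}) = α*(I^{(m+1)}) for some integer m ≥ 1, then there exist finite sets Z_V, Z_H ⊂ ℙ¹ such that Z = Z_V × Z_H, i.e. Z is a grid in X. -/
open MvPolynomial

noncomputable section

/-- The bi-graded polynomial ring `ℂ[x₀,x₁,y₀,y₁]`:
the first `Fin 2` summand indexes the variables `x₀,x₁`,
the second the variables `y₀,y₁`. -/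
abbrev R4 : Type := MvPolynomial (Fin 2 ⊕ Fin 2) ℂ

/-- The weight function giving the bi-grading of `R4`. -/
def biWeight : Fin 2 ⊕ Fin 2 → ℕ × ℕ := Sum.elim (fun _ => (1, 0)) (fun _ => (0, 1))

/-- `F` is a (possibly zero) form of bidegree `(p,q)`, i.e. homogeneous of degree `p`
in `x₀,x₁` and homogeneous of degree `q` in `y₀,y₁`. -/
def IsBiForm (F : R4) (p q : ℕ) : Prop :=
  IsWeightedHomogeneous biWeight F (p, q)

/-- The projective line `ℙ¹` over `ℂ`. -/
abbrev ProjLine := Projectivization ℂ (Fin 2 → ℂ)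

/-- The bi-homogeneous prime ideal of a point `P = ([a:b],[c:d])` of `X = ℙ¹ × ℙ¹`,
generated by `b·x₀ - a·x₁` and `d·y₀ - c·y₁`. -/
def pointIdeal (P : ProjLine × ProjLine) : Ideal R4 :=
  Ideal.span
    { C (P.1.rep 1) * X (Sum.inl 0) - C (P.1.rep 0) * X (Sum.inl 1),
      C (P.2.rep 1) * X (Sum.inr 0) - C (P.2.rep 0) * X (Sum.inr 1) }

/-- The `m`-th symbolic power of the radical ideal of the finite set of points `Z ⊂ X`:
`I^{(m)} = ⋂_{P ∈ Z} I(P)^m`.  For `m = 1` this is the radical ideal `I = I(Z)` itself. -/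
def symbPow (Z : Finset (ProjLine × ProjLine)) (m : ℕ) : Ideal R4 :=
  ⨅ P ∈ Z, pointIdeal P ^ m

/-- `α*(J)`: the least `t ≥ 0` such that `J` contains a nonzero form of bidegree `(t,t)`. -/
def alphaStar (J : Ideal R4) : ℕ :=
  sInf {t : ℕ | ∃ F ∈ J, F ≠ 0 ∧ IsBiForm F t t}

/-- `α⁺(J)`: the least `d ≥ 0` such that `J` contains a nonzero form of bidegree `(p,q)`
with `p + q = d`. -/
def alphaPlus (J : Ideal R4) : ℕ :=
  sInf {d : ℕ | ∃ p q : ℕ, p + q = d ∧ ∃ F ∈ J, F ≠ 0 ∧ IsBiForm F p q}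


/-- Affine coordinate ring. -/
abbrev A2 : Type := MvPolynomial (Fin 2) ℂ

/-- translation -/
def tr (z : Fin 2 → ℂ) : A2 →ₐ[ℂ] A2 := aeval (fun i => X i + C (z i))

lemma tr_tr (z w : Fin 2 → ℂ) (f : A2) : tr z (tr w f) = tr (z + w) f := by
  have : (tr z).comp (tr w) = tr (z + w) := by
    apply MvPolynomial.algHom_ext
    intro i
    simp [tr, add_assoc]
  exact DFunLike.congr_fun this f

lemma tr_zero (f : A2) : tr 0 f = f := by
  have : tr 0 = AlgHom.id ℂ A2 := by
    apply MvPolynomial.algHom_ext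
    intro i
    simp [tr]
  rw [this]; rfl

lemma tr_neg_tr (z : Fin 2 → ℂ) (f : A2) : tr z (tr (-z) f) = f := by
  rw [tr_tr, add_neg_cancel, tr_zero]

lemma tr_tr_neg (z : Fin 2 → ℂ) (f : A2) : tr (-z) (tr z f) = f := by
  rw [tr_tr, neg_add_cancel, tr_zero]

lemma tr_ne_zero (z : Fin 2 → ℂ) {f : A2} (hf : f ≠ 0) : tr z f ≠ 0 := by
  intro h
  apply hf
  rw [← tr_tr_neg z f, h, map_zero]

lemma tr_C (z : Fin 2 → ℂ) (c : ℂ) : tr z (C c) = C c := by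
  rw [← algebraMap_eq, AlgHom.commutes]

lemma tr_X (z : Fin 2 → ℂ) (i : Fin 2) : tr z (X i) = X i + C (z i) := by
  simp [tr]

lemma pderiv_tr (z : Fin 2 → ℂ) (i : Fin 2) (f : A2) :
    pderiv i (tr z f) = tr z (pderiv i f) := by
  induction f using MvPolynomial.induction_on with
  | C a => simp
  | add p q hp hq => simp [hp, hq]
  | mul_X p j hp =>
    simp only [map_mul, pderiv_mul, hp, tr_X, map_add, pderiv_C, add_zero]
    congr 2
    rw [pderiv_X, Pi.single_apply]
    split_ifs <;> simp

lemma degreeOf_tr_le (z : Fin 2 → ℂ) (i : Fin 2) (f : A2) :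
    degreeOf i (tr z f) ≤ degreeOf i f := by
  conv_lhs => rw [f.as_sum, map_sum]
  refine (degreeOf_sum_le _ _ _).trans ?_
  rw [Finset.sup_le_iff]
  intro s hs
  refine le_trans ?_ (monomial_le_degreeOf i hs)
  rw [monomial_eq, map_mul, tr_C, Finsupp.prod_fintype _ _ (by simp), map_prod]
  refine (degreeOf_C_mul_le _ _ _).trans ?_
  refine (degreeOf_prod_le _ _ _).trans ?_
  calc ∑ j, degreeOf i (tr z (X j ^ s j)) ≤ ∑ j, if j = i then s j else 0 := by
        apply Finset.sum_le_sum
        intro j _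
        rw [map_pow, tr_X]
        refine (degreeOf_pow_le _ _ _).trans ?_
        have : degreeOf i (X j + C (z j) : A2) ≤ if j = i then 1 else 0 := by
          refine (degreeOf_add_le _ _ _).trans ?_
          rw [degreeOf_X, degreeOf_C]
          simp [eq_comm]
        refine (Nat.mul_le_mul_left _ this).trans ?_
        split_ifs <;> simp
    _ = s i := by simp

/-- order of vanishing at z -/
def ord (z : Fin 2 → ℂ) (f : A2) : ℕ∞ := MvPowerSeries.order ((tr z f : A2) : MvPowerSeries (Fin 2) ℂ)

lemma ord_mul (z : Fin 2 → ℂ) (f g : A2) : ord z (f * g) = ord z f + ord z g := by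
  simp [ord, MvPowerSeries.order_mul]

lemma ord_ne_top (z : Fin 2 → ℂ) {f : A2} (hf : f ≠ 0) : ord z f ≠ ⊤ := by
  have := tr_ne_zero z hf
  simpa [ord] using this

lemma le_ord_iff (z : Fin 2 → ℂ) (f : A2) (k : ℕ) :
    (k : ℕ∞) ≤ ord z f ↔ ∀ s : Fin 2 →₀ ℕ, s.degree < k → coeff s (tr z f) = 0 := by
  constructor
  · intro h s hs
    have := MvPowerSeries.coeff_of_lt_order (f := ((tr z f : A2) : MvPowerSeries (Fin 2) ℂ)) (d := s)
      (lt_of_lt_of_le (by exact_mod_cast hs) h)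
    simpa using this
  · intro h
    apply MvPowerSeries.nat_le_order
    intro d hd
    simpa using h d hd

lemma le_ord_iff_mem (z : Fin 2 → ℂ) (f : A2) (k : ℕ) :
    (k : ℕ∞) ≤ ord z f ↔ tr z f ∈ idealOfVars (Fin 2) ℂ ^ k := by
  rw [le_ord_iff, mem_pow_idealOfVars_iff']

lemma ord_pderiv (z : Fin 2 → ℂ) (f : A2) (i : Fin 2) (k : ℕ) (h : ((k + 1 : ℕ) : ℕ∞) ≤ ord z f) :
    (k : ℕ∞) ≤ ord z (pderiv i f) := by
  rw [le_ord_iff] at h ⊢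
  intro s hs
  rw [← pderiv_tr, coeff_pderiv, h, zero_mul]
  simp [Finsupp.degree_single]
  exact hs

lemma one_le_ord_iff (z : Fin 2 → ℂ) (f : A2) : 1 ≤ ord z f ↔ eval z f = 0 := by
  have h1 : coeff 0 (tr z f) = eval z f := by
    rw [← constantCoeff_eq]
    have : (constantCoeff : A2 →+* ℂ).comp (tr z : A2 →+* A2) = eval z := by
      apply MvPolynomial.ringHom_ext <;> intros <;> simp [tr_X]
    exact DFunLike.congr_fun this f
  have := le_ord_iff z f 1
  rw [Nat.cast_one] at this
  rw [this, ← h1]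
  constructor
  · intro h; exact h 0 (by simp)
  · intro h s hs
    have : s = 0 := (Finsupp.degree_eq_zero_iff s).mp (by omega)
    rw [this, h]

lemma ord_eq_zero_of_eval {z : Fin 2 → ℂ} {f : A2} (h : eval z f ≠ 0) : ord z f = 0 := by
  rw [Ne, ← one_le_ord_iff] at h
  exact Order.lt_one_iff.mp (not_le.mp h)

/-- fibre -/
def Ln (i : Fin 2) (c : ℂ) : A2 := X i - C c

lemma eval_Ln (i : Fin 2) (c : ℂ) (z : Fin 2 → ℂ) : eval z (Ln i c) = z i - c := by simp [Ln]

lemma ord_Ln_le (i : Fin 2) (c : ℂ) (z : Fin 2 → ℂ) : ord z (Ln i c) ≤ 1 := by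
  by_contra h
  have h : ((2 : ℕ) : ℕ∞) ≤ ord z (Ln i c) := by
    push Not at h
    exact Order.add_one_le_of_lt h
  rw [le_ord_iff] at h
  have := h (Finsupp.single i 1) (by simp)
  have h0 : (0 : Fin 2 →₀ ℕ) ≠ Finsupp.single i 1 := fun h => by simpa using DFunLike.congr_fun h i
  simp [Ln, tr_X, coeff_X, coeff_C, h0] at this

lemma ord_Ln_ne {i : Fin 2} {c : ℂ} {z : Fin 2 → ℂ} (h : z i ≠ c) : ord z (Ln i c) = 0 :=
  ord_eq_zero_of_eval (by rw [eval_Ln]; exact sub_ne_zero.mpr h)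

lemma degreeOf_Ln_self (i : Fin 2) (c : ℂ) : degreeOf i (Ln i c) = 1 := by
  have h1 : degreeOf i (Ln i c) ≤ 1 := by
    rw [Ln, sub_eq_add_neg, ← C_neg]
    refine (degreeOf_add_le _ _ _).trans ?_
    simp [degreeOf_C]
  have h2 : Finsupp.single i 1 ∈ (Ln i c).support := by
    have h0 : (0 : Fin 2 →₀ ℕ) ≠ Finsupp.single i 1 := fun h => by simpa using DFunLike.congr_fun h i
    simp [Ln, coeff_X, coeff_C, h0]
  have := monomial_le_degreeOf i h2
  simp at this
  omega

lemma Ln_ne_zero (i : Fin 2) (c : ℂ) : Ln i c ≠ 0 := by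
  intro h
  have := degreeOf_Ln_self i c
  simp [h] at this

/-- Polynomials of bounded bidegree -/
def W (p q : ℕ) : Submodule ℂ A2 := restrictSupport ℂ {s | s 0 ≤ p ∧ s 1 ≤ q}

lemma mem_W {p q : ℕ} {f : A2} : f ∈ W p q ↔ degreeOf 0 f ≤ p ∧ degreeOf 1 f ≤ q := by
  rw [W, mem_restrictSupport_iff, degreeOf_le_iff, degreeOf_le_iff]
  constructor
  · intro h; exact ⟨fun s hs => (h hs).1, fun s hs => (h hs).2⟩
  · intro h s hs; exact ⟨h.1 s hs, h.2 s hs⟩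

/-- index equiv -/
def idxEquiv (p q : ℕ) : {s : Fin 2 →₀ ℕ | s 0 ≤ p ∧ s 1 ≤ q} ≃ Fin (p + 1) × Fin (q + 1) where
  toFun s := (⟨s.1 0, Nat.lt_succ_of_le s.2.1⟩, ⟨s.1 1, Nat.lt_succ_of_le s.2.2⟩)
  invFun x := ⟨Finsupp.equivFunOnFinite.symm ![x.1, x.2], by
    simp; omega⟩
  left_inv s := by
    apply Subtype.ext; ext i; fin_cases i <;> simp
  right_inv x := by simp

/-- basis -/
def basisW (p q : ℕ) : Module.Basis (Fin (p + 1) × Fin (q + 1)) ℂ (W p q) :=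
  (basisRestrictSupport ℂ _).reindex (idxEquiv p q)

instance (p q : ℕ) : FiniteDimensional ℂ (W p q) := (basisW p q).finiteDimensional_of_finite

lemma finrank_W (p q : ℕ) : Module.finrank ℂ (W p q) = (p + 1) * (q + 1) := by
  rw [Module.finrank_eq_card_basis (basisW p q)]; simp

lemma mul_mem_W {p q p' q' : ℕ} {f g : A2} (hf : f ∈ W p q) (hg : g ∈ W p' q') :
    f * g ∈ W (p + p') (q + q') := by
  rw [mem_W] at *
  exact ⟨(degreeOf_mul_le _ _ _).trans (by omega), (degreeOf_mul_le _ _ _).trans (by omega)⟩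


/-- exponent of total degree i -/
def ex (i j : ℕ) : Fin 2 →₀ ℕ := Finsupp.equivFunOnFinite.symm ![j, i - j]

lemma ex_inj {i j i' j' : ℕ} (h : j ≤ i) (h' : j' ≤ i') (e : ex i j = ex i' j') : i = i' ∧ j = j' := by
  have h0 := DFunLike.congr_fun e 0
  have h1 := DFunLike.congr_fun e 1
  simp [ex] at h0 h1
  omega

lemma degree_ex {i j : ℕ} (h : j ≤ i) : (ex i j).degree = i := by
  rw [Finsupp.degree_eq_sum]
  simp [ex]; omega

lemma ex_degree (s : Fin 2 →₀ ℕ) : ex s.degree (s 0) = s := by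
  rw [Finsupp.degree_eq_sum]
  ext i; fin_cases i <;> simp [ex]

/-- jet indices -/
abbrev Idx (Z : Finset (Fin 2 → ℂ)) (k : (Fin 2 → ℂ) → ℕ) : Type :=
  Σ z : Z, Σ i : Fin (k z), Fin (i + 1)

lemma card_Idx (Z : Finset (Fin 2 → ℂ)) (k : (Fin 2 → ℂ) → ℕ) :
    2 * Fintype.card (Idx Z k) = ∑ z ∈ Z, k z * (k z + 1) := by
  simp only [Fintype.card_sigma, Fintype.card_fin]
  rw [← Finset.sum_coe_sort Z, Finset.mul_sum]
  apply Finset.sum_congr rfl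
  intro z _
  rw [Fin.sum_univ_eq_sum_range (fun i => i + 1)]
  generalize k z = n
  induction n with
  | zero => simp
  | succ n ih => rw [Finset.sum_range_succ, mul_add, ih]; ring

/-- jets -/
def jet (Z : Finset (Fin 2 → ℂ)) (k : (Fin 2 → ℂ) → ℕ) : A2 →ₗ[ℂ] (Idx Z k → ℂ) :=
  LinearMap.pi fun x => (lcoeff ℂ (ex x.2.1 x.2.2)) ∘ₗ (tr x.1.1).toLinearMap

lemma jet_apply (Z : Finset (Fin 2 → ℂ)) (k : (Fin 2 → ℂ) → ℕ) (f : A2) (x : Idx Z k) :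
    jet Z k f x = coeff (ex x.2.1 x.2.2) (tr x.1.1 f) := rfl

lemma jet_eq_zero (Z : Finset (Fin 2 → ℂ)) (k : (Fin 2 → ℂ) → ℕ) (f : A2) :
    jet Z k f = 0 ↔ ∀ z ∈ Z, (k z : ℕ∞) ≤ ord z f := by
  constructor
  · intro h z hz
    rw [le_ord_iff]
    intro s hs
    have := congrFun h ⟨⟨z, hz⟩, ⟨s.degree, hs⟩, ⟨s 0, Nat.lt_succ_of_le (Finsupp.le_degree 0 s)⟩⟩
    rw [jet_apply] at this
    simpa [ex_degree] using this
  · intro h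
    funext x
    rw [jet_apply]
    exact (le_ord_iff _ _ _).mp (h x.1.1 x.1.2) _ (by
      rw [degree_ex (Nat.le_of_lt_succ x.2.2.2)]; exact x.2.1.2)

/-- Maximal ideal of a point -/
def MI (z : Fin 2 → ℂ) : Ideal A2 := Ideal.span (Set.range fun i => X i - C (z i))

lemma MI_map_le (z : Fin 2 → ℂ) : (MI z).map (tr z) ≤ idealOfVars (Fin 2) ℂ := by
  rw [MI, Ideal.map_span, Ideal.span_le]
  rintro _ ⟨_, ⟨i, rfl⟩, rfl⟩
  simp only [map_sub, tr_X, tr_C, add_sub_cancel_right]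
  exact Ideal.subset_span ⟨i, rfl⟩

lemma le_ord_of_mem (z : Fin 2 → ℂ) (k : ℕ) (f : A2) (h : f ∈ MI z ^ k) : (k : ℕ∞) ≤ ord z f := by
  rw [le_ord_iff_mem]
  have := Ideal.mem_map_of_mem (tr z) h
  rw [Ideal.map_pow] at this
  exact Ideal.pow_right_mono (MI_map_le z) k this

lemma MI_coprime {z w : Fin 2 → ℂ} (h : z ≠ w) : IsCoprime (MI z) (MI w) := by
  obtain ⟨i, hi⟩ := Function.ne_iff.mp h
  rw [Ideal.isCoprime_iff_exists]
  refine ⟨C ((w i - z i)⁻¹) * (X i - C (z i)), Ideal.mul_mem_left _ _ (Ideal.subset_span ⟨i, rfl⟩),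
    C ((z i - w i)⁻¹) * (X i - C (w i)), Ideal.mul_mem_left _ _ (Ideal.subset_span ⟨i, rfl⟩), ?_⟩
  have h1 : z i - w i ≠ 0 := sub_ne_zero.mpr hi
  have h2 : (w i - z i)⁻¹ = - (z i - w i)⁻¹ := by rw [← neg_sub, inv_neg]
  rw [h2, C_neg]
  have h3 : C ((z i - w i)⁻¹) * (C (z i) - C (w i)) = (1 : A2) := by
    rw [← C_sub, ← C_mul, inv_mul_cancel₀ h1, C_1]
  linear_combination h3

lemma jet_surj (Z : Finset (Fin 2 → ℂ)) (k : (Fin 2 → ℂ) → ℕ) : Function.Surjective (jet Z k) := by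
  intro v
  let x : Z → A2 := fun z => tr (-z.1)
    (∑ y : (Σ i : Fin (k z), Fin (i + 1)), monomial (ex y.1 y.2) (v ⟨z, y⟩))
  obtain ⟨r, hr⟩ := Ideal.exists_forall_sub_mem_ideal (I := fun z : Z => MI z.1 ^ k z.1)
    (fun z w hzw => IsCoprime.pow (MI_coprime (fun h => hzw (Subtype.ext h)))) x
  refine ⟨r, ?_⟩
  funext y
  rw [jet_apply]
  have h1 := (le_ord_iff _ _ _).mp (le_ord_of_mem _ _ _ (hr y.1)) (ex y.2.1 y.2.2) (by
      rw [degree_ex (Nat.le_of_lt_succ y.2.2.2)]; exact y.2.1.2)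
  rw [map_sub, coeff_sub, sub_eq_zero] at h1
  rw [h1]
  simp only [x]
  rw [tr_neg_tr, coeff_sum, Finset.sum_eq_single y.2]
  · simp
  · intro b _ hb
    rw [coeff_monomial, if_neg]
    intro e
    obtain ⟨e1, e2⟩ := ex_inj (Nat.le_of_lt_succ b.2.2) (Nat.le_of_lt_succ y.2.2.2) e
    apply hb
    obtain ⟨⟨b1, hb1⟩, ⟨b2, hb2⟩⟩ := b
    obtain ⟨y0, ⟨⟨y1, hy1⟩, ⟨y2, hy2⟩⟩⟩ := y
    simp only at e1 e2
    subst e1 e2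
    rfl
  · simp

lemma W_mono {p q p' q' : ℕ} (h : p ≤ p') (h' : q ≤ q') : W p q ≤ W p' q' := by
  intro f hf
  rw [mem_W] at *
  omega

lemma jet_surj_W (Z : Finset (Fin 2 → ℂ)) (k : (Fin 2 → ℂ) → ℕ) :
    ∃ N, ∀ v, ∃ f ∈ W N N, jet Z k f = v := by
  classical
  choose g hg using fun x : Idx Z k => jet_surj Z k (Pi.single x 1)
  refine ⟨Finset.univ.sup fun x => (g x).totalDegree, fun v => ⟨∑ x, v x • g x, ?_, ?_⟩⟩
  · apply Submodule.sum_mem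
    intro x _
    apply Submodule.smul_mem
    rw [mem_W]
    have := Finset.le_sup (f := fun x => (g x).totalDegree) (Finset.mem_univ x)
    exact ⟨(degreeOf_le_totalDegree _ _).trans this, (degreeOf_le_totalDegree _ _).trans this⟩
  · rw [map_sum]
    simp only [map_smul, hg]
    funext y
    simp [Finset.sum_apply, Pi.single_apply]

lemma mem_W_of_mul {D g : A2} (hD : D ≠ 0) {p q : ℕ}
    (h : D * g ∈ W (degreeOf 0 D + p) (degreeOf 1 D + q)) : g ∈ W p q := by
  by_cases hg : g = 0
  · rw [hg]; exact Submodule.zero_mem _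
  rw [mem_W, degreeOf_mul_eq hD hg, degreeOf_mul_eq hD hg] at h
  rw [mem_W]; omega

lemma linalg_count {K V U E F G : Type*} [Field K] [AddCommGroup V] [Module K V]
    [AddCommGroup U] [Module K U] [AddCommGroup E] [Module K E] [AddCommGroup F] [Module K F]
    [AddCommGroup G] [Module K G] [FiniteDimensional K V] [FiniteDimensional K U]
    [FiniteDimensional K E] [FiniteDimensional K G]
    (Φ : V →ₗ[K] U) (J : V →ₗ[K] E) (T : U →ₗ[K] F) (κ : G →ₗ[K] V)
    (hT : Function.Surjective T) (h1 : ∀ x, J x = 0 → T (Φ x) = 0)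
    (h2 : ∀ x, Φ x = 0 → x ∈ LinearMap.range κ) :
    Module.finrank K V + Module.finrank K F ≤
      Module.finrank K E + Module.finrank K G + Module.finrank K U := by
  have r1 := LinearMap.finrank_range_add_finrank_ker T
  rw [LinearMap.range_eq_top.mpr hT, finrank_top] at r1
  have r2 := LinearMap.finrank_range_add_finrank_ker J
  have r3 := Submodule.finrank_le (LinearMap.range J)
  have r4 := LinearMap.finrank_range_add_finrank_ker (Φ.domRestrict (LinearMap.ker J))
  have r5 : Module.finrank K (LinearMap.range (Φ.domRestrict (LinearMap.ker J))) ≤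
      Module.finrank K (LinearMap.ker T) := by
    apply Submodule.finrank_mono
    rintro _ ⟨⟨x, hx⟩, rfl⟩
    exact h1 x hx
  have r6 : Module.finrank K (LinearMap.ker (Φ.domRestrict (LinearMap.ker J))) ≤
      Module.finrank K G := by
    have : (LinearMap.ker (Φ.domRestrict (LinearMap.ker J))).map (LinearMap.ker J).subtype ≤
        LinearMap.range κ := by
      rintro _ ⟨⟨x, hx⟩, hx0, rfl⟩
      exact h2 x hx0
    have h2 := Submodule.finrank_mono this
    rw [Submodule.finrank_map_subtype_eq] at h2
    exact h2.trans (LinearMap.finrank_range_le κ)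
  omega

/-- Bezout inequality. -/
lemma bezout (D H : A2) (hD : Irreducible D) (hDH : ¬ D ∣ H) (a b c d : ℕ)
    (ha : degreeOf 0 D = a) (hb : degreeOf 1 D = b) (hH : H ∈ W c d) (Z : Finset (Fin 2 → ℂ))
    (μ n : (Fin 2 → ℂ) → ℕ) (hμ : ∀ z ∈ Z, (μ z : ℕ∞) ≤ ord z D)
    (hn : ∀ z ∈ Z, (n z : ℕ∞) ≤ ord z H) :
    ∑ z ∈ Z, μ z * n z ≤ a * d + b * c := by
  obtain ⟨M, hM⟩ := jet_surj_W Z (μ + n)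
  have hDW : D ∈ W a b := by rw [mem_W]; omega
  let V := W (c + M) (d + M) × W (a + M) (b + M)
  let U := W (a + c + M) (b + d + M)
  let Φ : V →ₗ[ℂ] U := LinearMap.codRestrict U
    (LinearMap.coprod ((LinearMap.mulRight ℂ D) ∘ₗ (W (c + M) (d + M)).subtype)
    ((LinearMap.mulRight ℂ H) ∘ₗ (W (a + M) (b + M)).subtype)) (fun x => by
      have e1 := mul_mem_W x.1.2 hDW
      have e2 := mul_mem_W x.2.2 hH
      exact Submodule.add_mem _ (W_mono (by omega) (by omega) e1) (W_mono (by omega) (by omega) e2))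
  have hΦ : ∀ x : V, (Φ x).1 = x.1.1 * D + x.2.1 * H := fun x => rfl
  let J : V →ₗ[ℂ] ((Idx Z n → ℂ) × (Idx Z μ → ℂ)) :=
    LinearMap.prodMap ((jet Z n) ∘ₗ (W _ _).subtype) ((jet Z μ) ∘ₗ (W _ _).subtype)
  have hJ : ∀ x : V, J x = (jet Z n x.1.1, jet Z μ x.2.1) := fun x => rfl
  let κ : W M M →ₗ[ℂ] V := LinearMap.prod
    (LinearMap.codRestrict _ ((LinearMap.mulRight ℂ (-H)) ∘ₗ (W M M).subtype) (fun x => by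
      have := mul_mem_W (Submodule.neg_mem _ hH) x.2
      rw [mul_comm] at this
      exact this))
    (LinearMap.codRestrict _ ((LinearMap.mulRight ℂ D) ∘ₗ (W M M).subtype) (fun x => by
      have := mul_mem_W hDW x.2
      rw [mul_comm] at this
      exact this))
  have hκ1 : ∀ x, (κ x).1.1 = x.1 * (-H) := fun x => rfl
  have hκ2 : ∀ x, (κ x).2.1 = x.1 * D := fun x => rfl
  have key := linalg_count (K := ℂ) Φ J ((jet Z (μ + n)).domRestrict U) κ ?_ ?_ ?_
  rotate_left
  · intro v
    obtain ⟨f, hf, hfv⟩ := hM v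
    exact ⟨⟨f, W_mono (by omega) (by omega) hf⟩, hfv⟩
  · intro x hx
    rw [hJ, Prod.mk_eq_zero, jet_eq_zero, jet_eq_zero] at hx
    change jet Z (μ + n) (x.1.1 * D + x.2.1 * H) = 0
    have e1 : jet Z (μ + n) (x.1.1 * D) = 0 := by
      rw [jet_eq_zero]
      intro z hz
      rw [ord_mul, Pi.add_apply, Nat.cast_add, add_comm]
      exact add_le_add (hx.1 z hz) (hμ z hz)
    have e2 : jet Z (μ + n) (x.2.1 * H) = 0 := by
      rw [jet_eq_zero]
      intro z hz
      rw [ord_mul, Pi.add_apply, Nat.cast_add]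
      exact add_le_add (hx.2 z hz) (hn z hz)
    rw [map_add, e1, e2, add_zero]
  · intro x hx0
    have h0 : x.1.1 * D + x.2.1 * H = 0 := congrArg Subtype.val hx0
    have h1 : D ∣ x.2.1 * H := ⟨- x.1.1, by linear_combination h0⟩
    obtain ⟨g, hg⟩ := (hD.prime.dvd_or_dvd h1).resolve_right hDH
    have hgW : g ∈ W M M := by
      apply mem_W_of_mul hD.ne_zero
      rw [← hg, ha, hb]
      exact x.2.2
    refine ⟨⟨g, hgW⟩, ?_⟩
    apply Prod.ext
    · apply Subtype.ext
      rw [hκ1]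
      apply mul_right_cancel₀ hD.ne_zero
      rw [hg] at h0
      linear_combination -h0
    · apply Subtype.ext
      rw [hκ2, hg, mul_comm]
  have fV : Module.finrank ℂ V = (c + M + 1) * (d + M + 1) + (a + M + 1) * (b + M + 1) := by
    rw [Module.finrank_prod, finrank_W, finrank_W]
  have fU : Module.finrank ℂ U = (a + c + M + 1) * (b + d + M + 1) := finrank_W _ _
  rw [fV, fU, finrank_W, Module.finrank_prod, Module.finrank_fintype_fun_eq_card,
    Module.finrank_fintype_fun_eq_card, Module.finrank_fintype_fun_eq_card] at key
  have c1 := card_Idx Z μ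
  have c2 := card_Idx Z n
  have c3 := card_Idx Z (μ + n)
  have c4 : ∑ z ∈ Z, (μ + n) z * ((μ + n) z + 1) =
      ∑ z ∈ Z, μ z * (μ z + 1) + ∑ z ∈ Z, n z * (n z + 1) + 2 * ∑ z ∈ Z, μ z * n z := by
    rw [← Finset.sum_add_distrib, Finset.mul_sum, ← Finset.sum_add_distrib]
    apply Finset.sum_congr rfl
    intros; simp only [Pi.add_apply]; ring
  nlinarith

lemma pderiv_ne_zero {D : A2} {i : Fin 2} (h : degreeOf i D ≠ 0) : pderiv i D ≠ 0 := by
  obtain ⟨s, hs, hsi⟩ : ∃ s ∈ D.support, s i ≠ 0 := by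
    by_contra hh
    push Not at hh
    apply h
    have := (degreeOf_le_iff (n := i) (f := D) (d := 0)).mpr (fun s hs => (hh s hs).le)
    omega
  intro h0
  have := coeff_pderiv (i := i) D (s - Finsupp.single i 1)
  rw [h0, coeff_zero, tsub_add_cancel_of_le (by simpa using Nat.one_le_iff_ne_zero.mpr hsi)] at this
  rcases mul_eq_zero.mp this.symm with h1 | h1
  · exact mem_support_iff.mp hs h1
  · exact Nat.cast_add_one_ne_zero _ h1

lemma degreeOf_pderiv_le (D : A2) (i j : Fin 2) : degreeOf j (pderiv i D) ≤ degreeOf j D := by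
  rw [degreeOf_le_iff]
  intro s hs
  rw [mem_support_iff, coeff_pderiv] at hs
  have := monomial_le_degreeOf j (mem_support_iff.mpr (left_ne_zero_of_mul hs))
  simp at this
  omega

lemma degreeOf_pderiv_self (D : A2) (i : Fin 2) : degreeOf i (pderiv i D) ≤ degreeOf i D - 1 := by
  rw [degreeOf_le_iff]
  intro s hs
  rw [mem_support_iff, coeff_pderiv] at hs
  have := monomial_le_degreeOf i (mem_support_iff.mpr (left_ne_zero_of_mul hs))
  simp at this
  omega

/-- Adjoint curve -/
lemma adjoint (D : A2) (hD : Irreducible D) (h0 : degreeOf 0 D ≠ 0) (h1 : degreeOf 1 D ≠ 0)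
    (Z : Finset (Fin 2 → ℂ)) :
    ∃ g ≠ 0, g ∈ W (degreeOf 0 D - 1) (degreeOf 1 D - 1) ∧ ∀ z ∈ Z, ord z D ≤ ord z g + 1 := by
  obtain ⟨a, ha⟩ := Nat.exists_eq_succ_of_ne_zero h0
  obtain ⟨b, hb⟩ := Nat.exists_eq_succ_of_ne_zero h1
  let μ : (Fin 2 → ℂ) → ℕ := fun z => (ord z D).toNat
  have hμ : ∀ z, (μ z : ℕ∞) = ord z D := fun z => ENat.natCast_toNat (ord_ne_top z hD.ne_zero)
  let n : (Fin 2 → ℂ) → ℕ := fun z => μ z - 1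
  have key := bezout D (pderiv 0 D) hD (by
    rintro ⟨g, hg⟩
    have hne := pderiv_ne_zero h0
    have hgne : g ≠ 0 := by rintro rfl; simp [hg] at hne
    have e1 := degreeOf_pderiv_self D 0
    rw [hg, degreeOf_mul_eq hD.ne_zero hgne] at e1
    omega) (a + 1) (b + 1) a (b + 1) ha hb (by
      have e1 := degreeOf_pderiv_self D 0
      have e2 := degreeOf_pderiv_le D 0 1
      rw [mem_W]; omega) Z μ n (fun z _ => (hμ z).le) (by
      intro z _
      by_cases hz : μ z = 0
      · simp [n, hz]
      · apply ord_pderiv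
        rw [← hμ]
        have : n z + 1 = μ z := Nat.sub_add_cancel (Nat.one_le_iff_ne_zero.mpr hz)
        rw [this])
  have hc := card_Idx Z n
  have hc2 : ∑ z ∈ Z, n z * (n z + 1) = ∑ z ∈ Z, μ z * n z := by
    apply Finset.sum_congr rfl
    intro z _
    by_cases hz : μ z = 0
    · simp [n, hz]
    · have : n z + 1 = μ z := Nat.sub_add_cancel (Nat.one_le_iff_ne_zero.mpr hz)
      rw [this, mul_comm]
  have hlt : Module.finrank ℂ (Idx Z n → ℂ) < Module.finrank ℂ (W a b) := by
    rw [finrank_W, Module.finrank_fintype_fun_eq_card]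
    nlinarith
  have := LinearMap.ker_ne_bot_of_finrank_lt (f := (jet Z n).domRestrict (W a b)) hlt
  obtain ⟨g, hg, hg0⟩ := Submodule.exists_mem_ne_zero_of_ne_bot this
  refine ⟨g.1, fun h => hg0 (Subtype.ext h), ?_, ?_⟩
  · rw [ha, hb]; exact g.2
  · intro z hz
    have := (jet_eq_zero Z n g.1).mp hg z hz
    rw [← hμ]
    refine le_trans ?_ (add_le_add_left this 1)
    norm_cast
    simp only [n]; omega


lemma enat_cancel {m : ℕ} {x : ℕ∞} (h : ((m + 1 : ℕ) : ℕ∞) ≤ x + 1) : (m : ℕ∞) ≤ x := by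
  induction x using ENat.recTopCoe with
  | top => exact le_top
  | coe x => norm_cast at *; omega

lemma ord_pow (z : Fin 2 → ℂ) (f : A2) (k : ℕ) : ord z (f ^ k) = k * ord z f := by
  induction k with
  | zero => simp [ord_eq_zero_of_eval (z := z) (f := (1 : A2)) (by simp)]
  | succ k ih => rw [pow_succ, ord_mul, ih]; push_cast; ring

lemma isUnit_of_degreeOf {u : A2} (hu : u ≠ 0) (h : ∀ i, degreeOf i u = 0) : IsUnit u := by
  have h1 : u = C (coeff 0 u) := by
    rw [← totalDegree_eq_zero_iff_eq_C]
    rw [← Nat.le_zero, totalDegree_eq, Finset.sup_le_iff]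
    intro s hs
    have : s = 0 := by
      ext i
      have := monomial_le_degreeOf i hs
      rw [h i] at this
      simpa using this
    simp [this]
  rw [h1]
  apply IsUnit.map C
  rw [isUnit_iff_ne_zero]
  intro h2
  rw [h2, C_0] at h1
  exact hu h1

lemma degreeOf_Ln_ne {i j : Fin 2} (h : i ≠ j) (c : ℂ) : degreeOf j (Ln i c) = 0 := by
  rw [← Nat.le_zero, Ln, sub_eq_add_neg, ← C_neg]
  refine (degreeOf_add_le _ _ _).trans ?_
  simp [degreeOf_C, degreeOf_X, h.symm]

lemma fin2_cases {i j : Fin 2} (h : i ≠ j) (k : Fin 2) : k = i ∨ k = j := by omega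

lemma Ln_irreducible (i : Fin 2) (c : ℂ) : Irreducible (Ln i c) := by
  constructor
  · intro hu
    have h := degreeOf_Ln_self i c
    obtain ⟨v, hv⟩ := hu.exists_right_inv
    have hv0 : v ≠ 0 := by rintro rfl; simp at hv
    have := degreeOf_mul_eq (n := i) (Ln_ne_zero i c) hv0
    rw [hv, h, degreeOf_one] at this
    omega
  · intro u v huv
    have hu : u ≠ 0 := by rintro rfl; exact Ln_ne_zero i c (by simpa using huv)
    have hv : v ≠ 0 := by rintro rfl; exact Ln_ne_zero i c (by simpa using huv)
    have h1 : ∀ k, k ≠ i → degreeOf k u = 0 ∧ degreeOf k v = 0 := by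
      intro k hk
      have := degreeOf_Ln_ne hk.symm c
      rw [huv, degreeOf_mul_eq hu hv] at this
      omega
    have h2 := degreeOf_Ln_self i c
    rw [huv, degreeOf_mul_eq hu hv] at h2
    by_cases h3 : degreeOf i u = 0
    · left
      apply isUnit_of_degreeOf hu
      intro k
      by_cases hk : k = i
      · rw [hk, h3]
      · exact (h1 k hk).1
    · right
      apply isUnit_of_degreeOf hv
      intro k
      by_cases hk : k = i
      · rw [hk]; omega
      · exact (h1 k hk).2

lemma fibre_of_degreeOf {i j : Fin 2} (hij : i ≠ j) {D : A2} (hD : Irreducible D)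
    (h : degreeOf j D = 0) : ∃ c, D ∣ Ln i c ∧ Ln i c ∣ D := by
  let p : Polynomial ℂ := aeval (fun k => if k = i then Polynomial.X else 0) D
  have hp : Polynomial.aeval (X i : A2) p = D := by
    have := MvPolynomial.hom_congr_vars
      (f₁ := (((Polynomial.aeval (X i : A2)).comp
        (aeval (R := ℂ) (fun k : Fin 2 => if k = i then (Polynomial.X : Polynomial ℂ) else 0)) :
          A2 →ₐ[ℂ] A2) : A2 →+* A2)) (f₂ := RingHom.id A2) (p₁ := D) (p₂ := D)
      (by ext; simp) (by
        intro k hk _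
        have : k = i := by
          rcases fin2_cases hij k with h1 | h1
          · exact h1
          · subst h1
            obtain ⟨s, hs, hks⟩ := (mem_vars_iff_mem_support k).mp hk
            have h2 := monomial_le_degreeOf k hs
            rw [Finsupp.mem_support_iff] at hks
            omega
        simp [this]) rfl
    exact this
  have hdeg : p.degree ≠ 0 := by
    intro h0
    have := Polynomial.eq_C_of_degree_eq_zero h0
    rw [this, Polynomial.aeval_C] at hp
    apply hD.not_isUnit
    rw [← hp]
    apply IsUnit.map
    rw [isUnit_iff_ne_zero]
    intro h2
    rw [h2, map_zero] at hp
    exact hD.ne_zero hp.symm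
  obtain ⟨c, hc⟩ := IsAlgClosed.exists_root p hdeg
  have h1 := Polynomial.dvd_iff_isRoot.mpr hc
  have h2 := map_dvd (Polynomial.aeval (X i : A2)) h1
  rw [hp] at h2
  have h3 : Ln i c ∣ D := by simpa [Ln] using h2
  exact ⟨c, ((Ln_irreducible i c).associated_of_dvd hD h3).symm.dvd, h3⟩

lemma exists_irred_root (z : Fin 2 → ℂ) (f : A2) (hf : f ≠ 0) (h : eval z f = 0) :
    ∃ D, Irreducible D ∧ D ∣ f ∧ eval z D = 0 := by
  induction f using WfDvdMonoid.induction_on_irreducible with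
  | zero => exact absurd rfl hf
  | unit u hu => exact absurd h (hu.map (eval z)).ne_zero
  | mul a i ha hi ih =>
    rw [map_mul, mul_eq_zero] at h
    rcases h with h | h
    · exact ⟨i, hi, dvd_mul_right _ _, h⟩
    · obtain ⟨D, h1, h2, h3⟩ := ih ha h
      exact ⟨D, h1, h2.mul_left _, h3⟩

lemma degreeOf_eq_zero_of_irred (j : Fin 2) (f : A2) (hf : f ≠ 0)
    (h : ∀ D, Irreducible D → D ∣ f → degreeOf j D = 0) : degreeOf j f = 0 := by
  induction f using WfDvdMonoid.induction_on_irreducible with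
  | zero => simp
  | unit u hu =>
    obtain ⟨v, hv⟩ := hu.exists_right_inv
    have hv0 : v ≠ 0 := by rintro rfl; simp at hv
    have := degreeOf_mul_eq (n := j) hf hv0
    rw [hv, degreeOf_one] at this
    omega
  | mul a i ha hi ih =>
    rw [degreeOf_mul_eq hi.ne_zero ha, h i hi (dvd_mul_right _ _),
      ih ha (fun D h1 h2 => h D h1 (h2.mul_left _))]

/-- critical polynomial -/
structure Crit (Z : Finset (Fin 2 → ℂ)) (m t : ℕ) (f : A2) : Prop where
  ht : 0 < t
  hf : f ≠ 0
  deg : ∀ i, degreeOf i f ≤ t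
  hord : ∀ z ∈ Z, ((m + 1 : ℕ) : ℕ∞) ≤ ord z f
  hmin : ∀ g : A2, g ≠ 0 → (∀ i, degreeOf i g ≤ t - 1) → ¬ ∀ z ∈ Z, (m : ℕ∞) ≤ ord z g

namespace Crit
variable {Z : Finset (Fin 2 → ℂ)} {m t : ℕ} {f : A2}

lemma F1 (h : Crit Z m t f) {i j : Fin 2} (hij : i ≠ j) {D : A2} (hD : Irreducible D) (hDf : D ∣ f)
    (hi : degreeOf i D ≠ 0) : degreeOf j D = 0 := by
  by_contra hj
  have hall : ∀ k, degreeOf k D ≠ 0 := by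
    intro k
    rcases fin2_cases hij k with rfl | rfl <;> assumption
  obtain ⟨g, hg0, hgW, hgo⟩ := adjoint D hD (hall 0) (hall 1) Z
  have hgW' : ∀ k, degreeOf k g ≤ degreeOf k D - 1 := by
    rw [mem_W] at hgW
    intro k; fin_cases k
    exacts [hgW.1, hgW.2]
  obtain ⟨E, rfl⟩ := hDf
  have hE : E ≠ 0 := right_ne_zero_of_mul h.hf
  refine h.hmin (g * E) (mul_ne_zero hg0 hE) ?_ ?_
  · intro k
    have e1 := h.deg k
    rw [degreeOf_mul_eq hD.ne_zero hE] at e1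
    rw [degreeOf_mul_eq hg0 hE]
    have := hgW' k
    have := hall k
    omega
  · intro z hz
    apply enat_cancel
    refine (h.hord z hz).trans ?_
    rw [ord_mul, ord_mul, add_right_comm]
    gcongr
    exact hgo z hz

lemma F2 (h : Crit Z m t f) {D : A2} (hD : Irreducible D) (hDf : D ∣ f) :
    ∃ i c, D ∣ Ln i c ∧ Ln i c ∣ D := by
  by_cases h0 : degreeOf 0 D = 0
  · exact ⟨1, fibre_of_degreeOf (by decide) hD h0⟩
  · exact ⟨0, fibre_of_degreeOf (j := 1) (by decide) hD (h.F1 (by decide) hD hDf h0)⟩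

lemma F3 (h : Crit Z m t f) {E : A2} (hE : E ∣ f) {z : Fin 2 → ℂ} (hz : eval z E = 0) :
    ∃ i, Ln i (z i) ∣ E := by
  have hE0 : E ≠ 0 := fun h0 => h.hf (by rw [h0] at hE; exact zero_dvd_iff.mp hE)
  obtain ⟨D, hD, hDE, hDz⟩ := exists_irred_root z E hE0 hz
  obtain ⟨i, c, h1, h2⟩ := h.F2 hD (hDE.trans hE)
  have h3 := map_dvd (eval z) h1
  rw [hDz, zero_dvd_iff, eval_Ln, sub_eq_zero] at h3
  exact ⟨i, h3 ▸ h2.trans hDE⟩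

lemma F4 (h : Crit Z m t f) {i j : Fin 2} (hij : i ≠ j) {a : ℂ} (ha : Ln i a ∣ f) :
    ∃ c, Ln j c ∣ f := by
  by_contra hc
  push Not at hc
  have hd : degreeOf j f = 0 := by
    apply degreeOf_eq_zero_of_irred j f h.hf
    intro D hD hDf
    by_contra hj
    obtain ⟨c, _, h2⟩ := fibre_of_degreeOf hij.symm hD (h.F1 hij.symm hD hDf hj)
    exact hc c (h2.trans hDf)
  obtain ⟨E, rfl⟩ := ha
  have hE : E ≠ 0 := right_ne_zero_of_mul h.hf
  refine h.hmin E hE ?_ ?_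
  · intro k
    have e1 := h.deg k
    rw [degreeOf_mul_eq (Ln_ne_zero _ _) hE] at e1 hd
    rcases fin2_cases hij k with rfl | rfl
    · rw [degreeOf_Ln_self] at e1; omega
    · omega
  · intro z hz
    apply enat_cancel
    refine (h.hord z hz).trans ?_
    rw [ord_mul, add_comm]
    gcongr
    exact ord_Ln_le _ _ _

lemma not_dvd_Ln {i j : Fin 2} (hij : i ≠ j) (a c : ℂ) : ¬ Ln j c ∣ Ln i a := by
  rintro ⟨E, hE⟩
  have hE0 : E ≠ 0 := by rintro rfl; exact Ln_ne_zero i a (by simpa using hE)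
  have := degreeOf_Ln_ne hij a
  rw [hE, degreeOf_mul_eq (Ln_ne_zero _ _) hE0, degreeOf_Ln_self] at this
  omega

lemma F5 (h : Crit Z m t f) {a c : ℂ} (ha : Ln 0 a ∣ f) (hc : Ln 1 c ∣ f) :
    ![a, c] ∈ Z := by
  by_contra hZ
  obtain ⟨E, rfl⟩ := ha
  obtain ⟨E, rfl⟩ := ((Ln_irreducible 1 c).prime.dvd_or_dvd hc).resolve_left
    (not_dvd_Ln (by decide) a c)
  have hE : E ≠ 0 := right_ne_zero_of_mul (right_ne_zero_of_mul h.hf)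
  have hE' := right_ne_zero_of_mul h.hf
  refine h.hmin E hE ?_ ?_
  · intro k
    have e1 := h.deg k
    rw [degreeOf_mul_eq (Ln_ne_zero _ _) hE', degreeOf_mul_eq (Ln_ne_zero _ _) hE] at e1
    fin_cases k
    · have := degreeOf_Ln_self 0 a
      simp at e1 ⊢
      omega
    · have := degreeOf_Ln_self 1 c
      simp at e1 ⊢
      omega
  · intro z hz
    apply enat_cancel
    refine (h.hord z hz).trans ?_
    rw [ord_mul, ord_mul]
    by_cases h0 : z 0 = a
    · have h1 : z 1 ≠ c := by
        rintro rfl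
        apply hZ
        convert hz
        funext k; fin_cases k <;> simp [h0]
      rw [ord_Ln_ne h1, zero_add, add_comm]
      gcongr
      exact ord_Ln_le _ _ _
    · rw [ord_Ln_ne h0, zero_add, add_comm]
      gcongr
      exact ord_Ln_le _ _ _

lemma F6 (h : Crit Z m t f) {i j : Fin 2} (hij : i ≠ j) {z : Fin 2 → ℂ} (hz : z ∈ Z)
    (hi : Ln i (z i) ∣ f) : Ln j (z j) ∣ f := by
  by_contra hj
  obtain ⟨c, hc⟩ := h.F4 hij hi
  have hpow : ∀ k, k ≤ m + 1 → Ln i (z i) ^ k ∣ f := by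
    intro k
    induction k with
    | zero => simp
    | succ k ih =>
      intro hk
      obtain ⟨E, hE⟩ := ih (by omega)
      have hEf : E ∣ f := ⟨_, hE.trans (mul_comm _ _)⟩
      have h1 : 1 ≤ ord z E := by
        have h2 := h.hord z hz
        rw [hE, ord_mul, ord_pow] at h2
        by_contra h3
        rw [not_le, Order.lt_one_iff] at h3
        rw [h3, add_zero] at h2
        have h4 : (k : ℕ∞) * ord z (Ln i (z i)) ≤ k * 1 := by gcongr; exact ord_Ln_le _ _ _
        have h5 := h2.trans h4
        rw [mul_one] at h5
        norm_cast at h5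
        omega
      rw [one_le_ord_iff] at h1
      obtain ⟨k', hk'⟩ := h.F3 hEf h1
      rcases fin2_cases hij k' with rfl | rfl
      · obtain ⟨E', rfl⟩ := hk'
        exact ⟨E', by rw [hE]; ring⟩
      · exact absurd (hk'.trans hEf) hj
  obtain ⟨E, rfl⟩ := hpow (m + 1) le_rfl
  have hp := (Ln_irreducible j c).prime
  obtain ⟨E, rfl⟩ := (hp.dvd_or_dvd hc).resolve_left
    (fun h => not_dvd_Ln hij (z i) c (hp.dvd_of_dvd_pow h))
  have hE' := right_ne_zero_of_mul h.hf
  have hE : E ≠ 0 := right_ne_zero_of_mul hE'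
  have hP : ∀ k, Ln i (z i) ^ k ≠ 0 := fun k => pow_ne_zero _ (Ln_ne_zero _ _)
  refine h.hmin (Ln i (z i) ^ m * E) (mul_ne_zero (hP m) hE) ?_ ?_
  · intro k
    have e1 := h.deg k
    rw [pow_succ, mul_assoc, degreeOf_mul_eq (hP m) (mul_ne_zero (Ln_ne_zero _ _) hE'),
      degreeOf_mul_eq (Ln_ne_zero _ _) hE', degreeOf_mul_eq (Ln_ne_zero _ _) hE] at e1
    rw [degreeOf_mul_eq (hP m) hE]
    rcases fin2_cases hij k with rfl | rfl
    · rw [degreeOf_Ln_self] at e1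
      omega
    · rw [degreeOf_Ln_self] at e1
      omega
  · intro w hw
    by_cases hwi : w i = z i
    · rw [ord_mul, ord_pow]
      have h1 : 1 ≤ ord w (Ln i (z i)) := by
        rw [one_le_ord_iff, eval_Ln, hwi, sub_self]
      calc (m : ℕ∞) = m * 1 := (mul_one _).symm
        _ ≤ m * ord w (Ln i (z i)) := by gcongr
        _ ≤ _ := le_self_add
    · have h1 := h.hord w hw
      rw [ord_mul, ord_pow, ord_Ln_ne hwi, mul_zero, zero_add, ord_mul] at h1
      rw [ord_mul, ord_pow, ord_Ln_ne hwi, mul_zero, zero_add]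
      apply enat_cancel
      refine h1.trans ?_
      rw [add_comm]
      gcongr
      exact ord_Ln_le _ _ _

lemma grid (h : Crit Z m t f) (z : Fin 2 → ℂ) : z ∈ Z ↔ Ln 0 (z 0) ∣ f ∧ Ln 1 (z 1) ∣ f := by
  constructor
  · intro hz
    have h1 : eval z f = 0 := by
      rw [← one_le_ord_iff]
      refine le_trans ?_ (h.hord z hz)
      norm_cast
      omega
    obtain ⟨i, hi⟩ := h.F3 dvd_rfl h1
    fin_cases i
    · exact ⟨hi, h.F6 (by decide) hz hi⟩
    · exact ⟨h.F6 (by decide) hz hi, hi⟩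
  · rintro ⟨h0, h1⟩
    have := h.F5 h0 h1
    convert this
    funext k; fin_cases k <;> simp

end Crit

/-- dehomogenization -/
def phi (e : ℂ) : R4 →ₐ[ℂ] A2 :=
  aeval (Sum.elim ![X 0, 1 + C e * X 0] ![X 1, 1 + C e * X 1])

/-- linear form not vanishing on the points, in variables x -/
def lx (e : ℂ) : R4 := X (Sum.inl 1) - C e * X (Sum.inl 0)
/-- linear form not vanishing on the points, in variables y -/
def ly (e : ℂ) : R4 := X (Sum.inr 1) - C e * X (Sum.inr 0)

lemma phi_C (e c : ℂ) : phi e (C c) = C c := by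
  rw [← algebraMap_eq, AlgHom.commutes]; rfl
lemma phi_x0 (e : ℂ) : phi e (X (Sum.inl 0)) = X 0 := by simp [phi]
lemma phi_x1 (e : ℂ) : phi e (X (Sum.inl 1)) = 1 + C e * X 0 := by simp [phi]
lemma phi_y0 (e : ℂ) : phi e (X (Sum.inr 0)) = X 1 := by simp [phi]
lemma phi_y1 (e : ℂ) : phi e (X (Sum.inr 1)) = 1 + C e * X 1 := by simp [phi]
lemma phi_lx (e : ℂ) : phi e (lx e) = 1 := by
  simp only [lx, map_sub, map_mul, phi_C, phi_x0, phi_x1]; ring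
lemma phi_ly (e : ℂ) : phi e (ly e) = 1 := by
  simp only [ly, map_sub, map_mul, phi_C, phi_y0, phi_y1]; ring

lemma lx_ne (e : ℂ) : lx e ≠ 0 := by
  intro h; have := phi_lx e; simp [h] at this
lemma ly_ne (e : ℂ) : ly e ≠ 0 := by
  intro h; have := phi_ly e; simp [h] at this

/-- affine coordinate -/
def co (e : ℂ) (p : ProjLine) : ℂ := p.rep 0 / (p.rep 1 - e * p.rep 0)

/-- affine point -/
def pt (e : ℂ) (P : ProjLine × ProjLine) : Fin 2 → ℂ := ![co e P.1, co e P.2]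

/-- e is good for p -/
def Good (e : ℂ) (p : ProjLine) : Prop := p.rep 1 - e * p.rep 0 ≠ 0

lemma exists_good (S : Finset ProjLine) : ∃ e, ∀ p ∈ S, Good e p := by
  classical
  obtain ⟨e, he⟩ := Infinite.exists_notMem_finset (S.image fun p => p.rep 1 / p.rep 0)
  refine ⟨e, fun p hp h => ?_⟩
  by_cases h0 : p.rep 0 = 0
  · rw [h0, mul_zero, sub_zero] at h
    apply p.rep_nonzero
    funext k; fin_cases k
    exacts [h0, h]
  · apply he
    rw [Finset.mem_image]
    refine ⟨p, hp, ?_⟩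
    rw [div_eq_iff h0]
    linear_combination h

lemma co_inj {e : ℂ} {p q : ProjLine} (hp : Good e p) (hq : Good e q) (h : co e p = co e q) :
    p = q := by
  unfold Good at hp hq
  unfold co at h
  rw [← p.mk_rep, ← q.mk_rep, Projectivization.mk_eq_mk_iff']
  rw [div_eq_div_iff hp hq] at h
  refine ⟨(p.rep 1 - e * p.rep 0) / (q.rep 1 - e * q.rep 0), ?_⟩
  funext k
  rw [Pi.smul_apply, smul_eq_mul, div_mul_eq_mul_div, div_eq_iff hq]
  fin_cases k
  · simp only [Fin.zero_eta]
    linear_combination -h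
  · simp only [Fin.mk_one]
    linear_combination (-e) * h

lemma gen_x {e : ℂ} {p : ProjLine} (hp : Good e p) :
    C (p.rep 1) * X (Sum.inl 0) - C (p.rep 0) * X (Sum.inl 1) =
      (C (p.rep 1 - e * p.rep 0) * (X (Sum.inl 0) - C (co e p) * lx e) : R4) := by
  have : C (p.rep 1 - e * p.rep 0) * C (co e p) = (C (p.rep 0) : R4) := by
    rw [← C_mul, co, mul_div_cancel₀ _ hp]
  rw [mul_sub, ← mul_assoc, this, lx]
  simp only [C_sub, C_mul]
  ring

lemma gen_y {e : ℂ} {p : ProjLine} (hp : Good e p) :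
    C (p.rep 1) * X (Sum.inr 0) - C (p.rep 0) * X (Sum.inr 1) =
      (C (p.rep 1 - e * p.rep 0) * (X (Sum.inr 0) - C (co e p) * ly e) : R4) := by
  have : C (p.rep 1 - e * p.rep 0) * C (co e p) = (C (p.rep 0) : R4) := by
    rw [← C_mul, co, mul_div_cancel₀ _ hp]
  rw [mul_sub, ← mul_assoc, this, ly]
  simp only [C_sub, C_mul]
  ring

lemma map_pointIdeal_le {e : ℂ} {P : ProjLine × ProjLine} (h1 : Good e P.1) (h2 : Good e P.2) :
    (pointIdeal P).map (phi e) ≤ MI (pt e P) := by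
  rw [pointIdeal, Ideal.map_span, Ideal.span_le]
  rintro _ ⟨_, rfl | rfl, rfl⟩
  · rw [gen_x h1, map_mul]
    apply Ideal.mul_mem_left
    rw [map_sub, map_mul, phi_lx, phi_x0, phi_C, mul_one]
    exact Ideal.subset_span ⟨0, rfl⟩
  · rw [gen_y h2, map_mul]
    apply Ideal.mul_mem_left
    rw [map_sub, map_mul, phi_ly, phi_y0, phi_C, mul_one]
    exact Ideal.subset_span ⟨1, rfl⟩

lemma ord_phi {e : ℂ} {P : ProjLine × ProjLine} (h1 : Good e P.1) (h2 : Good e P.2) {m : ℕ}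
    {F : R4} (hF : F ∈ pointIdeal P ^ m) : (m : ℕ∞) ≤ ord (pt e P) (phi e F) := by
  apply le_ord_of_mem
  have := Ideal.mem_map_of_mem (phi e) hF
  rw [Ideal.map_pow] at this
  exact Ideal.pow_right_mono (map_pointIdeal_le h1 h2) m this

lemma mem_pointIdeal_x {e : ℂ} {P : ProjLine × ProjLine} (h1 : Good e P.1) :
    X (Sum.inl 0) - C (co e P.1) * lx e ∈ pointIdeal P := by
  have h : C (P.1.rep 1) * X (Sum.inl 0) - C (P.1.rep 0) * X (Sum.inl 1) ∈ pointIdeal P :=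
    Ideal.subset_span (Or.inl rfl)
  rw [gen_x h1] at h
  have := Ideal.mul_mem_left _ (C ((P.1.rep 1 - e * P.1.rep 0)⁻¹)) h
  rwa [← mul_assoc, ← C_mul, inv_mul_cancel₀ h1, C_1, one_mul] at this

lemma mem_pointIdeal_y {e : ℂ} {P : ProjLine × ProjLine} (h1 : Good e P.2) :
    X (Sum.inr 0) - C (co e P.2) * ly e ∈ pointIdeal P := by
  have h : C (P.2.rep 1) * X (Sum.inr 0) - C (P.2.rep 0) * X (Sum.inr 1) ∈ pointIdeal P :=
    Ideal.subset_span (Or.inr rfl)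
  rw [gen_y h1] at h
  have := Ideal.mul_mem_left _ (C ((P.2.rep 1 - e * P.2.rep 0)⁻¹)) h
  rwa [← mul_assoc, ← C_mul, inv_mul_cancel₀ h1, C_1, one_mul] at this

lemma biform_exp {F : R4} {p q : ℕ} (hF : IsBiForm F p q) {s : Fin 2 ⊕ Fin 2 →₀ ℕ}
    (hs : s ∈ F.support) :
    s (Sum.inl 0) + s (Sum.inl 1) = p ∧ s (Sum.inr 0) + s (Sum.inr 1) = q := by
  have h := hF (mem_support_iff.mp hs)
  rw [Finsupp.weight_apply, Finsupp.sum_fintype _ _ (by simp)] at h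
  have ha := congrArg Prod.fst h
  have hb := congrArg Prod.snd h
  simp [biWeight, Fintype.sum_sum_type, -nsmul_eq_mul] at ha hb
  exact ⟨ha, hb⟩

lemma monomial_R4 (s : Fin 2 ⊕ Fin 2 →₀ ℕ) (c : ℂ) : (monomial s c : R4) =
    C c * (X (Sum.inl 0) ^ s (Sum.inl 0) * X (Sum.inl 1) ^ s (Sum.inl 1) *
      (X (Sum.inr 0) ^ s (Sum.inr 0) * X (Sum.inr 1) ^ s (Sum.inr 1))) := by
  rw [monomial_eq, Finsupp.prod_fintype _ _ (by simp), Fintype.prod_sum_type]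
  simp

lemma phi_mem_W (e : ℂ) {F : R4} {p q : ℕ} (hF : IsBiForm F p q) : phi e F ∈ W p q := by
  rw [F.as_sum, map_sum]
  apply Submodule.sum_mem
  intro s hs
  obtain ⟨h1, h2⟩ := biform_exp hF hs
  rw [monomial_R4, ← smul_eq_C_mul, map_smul]
  apply Submodule.smul_mem
  have hpow : ∀ {g : A2} {a b : ℕ} (k : ℕ), g ∈ W a b → g ^ k ∈ W (k * a) (k * b) := by
    intro g a b k hg
    rw [mem_W] at *
    exact ⟨(degreeOf_pow_le _ _ _).trans (Nat.mul_le_mul_left _ hg.1),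
      (degreeOf_pow_le _ _ _).trans (Nat.mul_le_mul_left _ hg.2)⟩
  have hX0 : (X 0 : A2) ∈ W 1 0 := by rw [mem_W]; simp [degreeOf_X]
  have hX1 : (X 1 : A2) ∈ W 0 1 := by rw [mem_W]; simp [degreeOf_X]
  have hone : ∀ a b, (1 : A2) ∈ W a b := by intro a b; rw [mem_W]; simp
  have hL0 : (1 + C e * X 0 : A2) ∈ W 1 0 := by
    rw [← smul_eq_C_mul]
    exact Submodule.add_mem _ (hone _ _) (Submodule.smul_mem _ _ hX0)
  have hL1 : (1 + C e * X 1 : A2) ∈ W 0 1 := by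
    rw [← smul_eq_C_mul]
    exact Submodule.add_mem _ (hone _ _) (Submodule.smul_mem _ _ hX1)
  simp only [map_mul, map_pow, phi_x0, phi_x1, phi_y0, phi_y1]
  have := mul_mem_W (mul_mem_W (hpow (s (Sum.inl 0)) hX0) (hpow (s (Sum.inl 1)) hL0))
    (mul_mem_W (hpow (s (Sum.inr 0)) hX1) (hpow (s (Sum.inr 1)) hL1))
  refine W_mono ?_ ?_ this <;> omega

/-- fraction field -/
abbrev KK : Type := FractionRing R4

/-- embedding -/
abbrev io : R4 →ₐ[ℂ] KK := Algebra.algHom ℂ R4 KK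

lemma io_inj : Function.Injective io := IsFractionRing.injective R4 KK

/-- homogenization, in the fraction field -/
def theta (e : ℂ) (z : Fin 2 → ℂ) : A2 →ₐ[ℂ] KK :=
  aeval ![io (X (Sum.inl 0)) / io (lx e) - io (C (z 0)), io (X (Sum.inr 0)) / io (ly e) - io (C (z 1))]

lemma io_lx_ne (e : ℂ) : io (lx e) ≠ 0 := by
  rw [Ne, map_eq_zero_iff _ io_inj]; exact lx_ne e
lemma io_ly_ne (e : ℂ) : io (ly e) ≠ 0 := by
  rw [Ne, map_eq_zero_iff _ io_inj]; exact ly_ne e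

lemma io_C (c : ℂ) : io (C c) = algebraMap ℂ KK c := io.commutes c

lemma theta_C (e : ℂ) (z : Fin 2 → ℂ) (c : ℂ) : theta e z (C c) = io (C c) := by
  rw [io_C]; exact (theta e z).commutes c

lemma theta_tr (e : ℂ) (z : Fin 2 → ℂ) (f : A2) : theta e z (tr z f) = theta e 0 f := by
  have : (theta e z).comp (tr z) = theta e 0 := by
    apply MvPolynomial.algHom_ext
    intro i
    rw [AlgHom.comp_apply, tr_X, map_add, theta_C]
    fin_cases i <;> simp [theta]
  exact DFunLike.congr_fun this f

lemma theta_phi (e : ℂ) {F : R4} {p q : ℕ} (hF : IsBiForm F p q) :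
    io F = io (lx e) ^ p * io (ly e) ^ q * theta e 0 (phi e F) := by
  conv_lhs => rw [F.as_sum]
  conv_rhs => rw [F.as_sum]
  simp only [map_sum]
  rw [Finset.mul_sum]
  apply Finset.sum_congr rfl
  intro s hs
  obtain ⟨h1, h2⟩ := biform_exp hF hs
  have hx := io_lx_ne e
  have hy := io_ly_ne e
  have a0 : io (X (Sum.inl 0)) = io (lx e) * theta e 0 (phi e (X (Sum.inl 0))) := by
    rw [phi_x0]; simp [theta]; field_simp
  have a1 : io (X (Sum.inl 1)) = io (lx e) * theta e 0 (phi e (X (Sum.inl 1))) := by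
    have : io (X (Sum.inl 1)) = io (lx e) + io (C e) * io (X (Sum.inl 0)) := by
      rw [← map_mul, ← map_add]; congr 1; rw [lx]; ring
    rw [this, phi_x1, map_add, map_mul, map_one, theta_C, a0, phi_x0]; ring
  have b0 : io (X (Sum.inr 0)) = io (ly e) * theta e 0 (phi e (X (Sum.inr 0))) := by
    rw [phi_y0]; simp [theta]; field_simp
  have b1 : io (X (Sum.inr 1)) = io (ly e) * theta e 0 (phi e (X (Sum.inr 1))) := by
    have : io (X (Sum.inr 1)) = io (ly e) + io (C e) * io (X (Sum.inr 0)) := by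
      rw [← map_mul, ← map_add]; congr 1; rw [ly]; ring
    rw [this, phi_y1, map_add, map_mul, map_one, theta_C, b0, phi_y0]; ring
  rw [monomial_R4]
  simp only [map_mul, map_pow, phi_C, theta_C]
  rw [a0, a1, b0, b1, ← h1, ← h2]
  ring

lemma phi_ne_zero (e : ℂ) {F : R4} {p q : ℕ} (hF : IsBiForm F p q) (h : F ≠ 0) : phi e F ≠ 0 := by
  intro h0
  apply h
  apply io_inj
  rw [theta_phi e hF, h0, map_zero, mul_zero, map_zero]

/-- homogenization centered at z -/
def hmg (e : ℂ) (z : Fin 2 → ℂ) (p q : ℕ) (g : A2) : R4 :=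
  ∑ s ∈ g.support, C (coeff s g) *
    ((X (Sum.inl 0) - C (z 0) * lx e) ^ s 0 * lx e ^ (p - s 0) *
      ((X (Sum.inr 0) - C (z 1) * ly e) ^ s 1 * ly e ^ (q - s 1)))

lemma monomial_A2 (s : Fin 2 →₀ ℕ) (c : ℂ) : (monomial s c : A2) =
    C c * (X 0 ^ s 0 * X 1 ^ s 1) := by
  rw [monomial_eq, Finsupp.prod_fintype _ _ (by simp)]
  simp

lemma io_hmg (e : ℂ) (z : Fin 2 → ℂ) {p q : ℕ} {g : A2} (hg : g ∈ W p q) :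
    io (hmg e z p q g) = io (lx e) ^ p * io (ly e) ^ q * theta e z g := by
  conv_rhs => rw [g.as_sum]
  rw [hmg]
  simp only [map_sum]
  rw [Finset.mul_sum]
  apply Finset.sum_congr rfl
  intro s hs
  have h1 : s 0 ≤ p := (hg hs).1
  have h2 : s 1 ≤ q := (hg hs).2
  have hx := io_lx_ne e
  have hy := io_ly_ne e
  have a0 : io (X (Sum.inl 0) - C (z 0) * lx e) = io (lx e) * theta e z (X 0) := by
    simp only [theta, aeval_X, map_sub, map_mul]
    simp
    field_simp
  have b0 : io (X (Sum.inr 0) - C (z 1) * ly e) = io (ly e) * theta e z (X 1) := by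
    simp only [theta, aeval_X, map_sub, map_mul]
    simp
    field_simp
  have e1 : io (lx e) ^ p = io (lx e) ^ s 0 * io (lx e) ^ (p - s 0) := by
    rw [← pow_add]; congr 1; omega
  have e2 : io (ly e) ^ q = io (ly e) ^ s 1 * io (ly e) ^ (q - s 1) := by
    rw [← pow_add]; congr 1; omega
  rw [monomial_A2]
  simp only [map_mul (theta e z), map_pow (theta e z), theta_C, e1, e2]
  rw [map_mul, map_mul, map_mul, map_mul, map_pow, map_pow, map_pow, map_pow, a0, b0]
  ring

lemma tr_mem_W (z : Fin 2 → ℂ) {p q : ℕ} {f : A2} (hf : f ∈ W p q) : tr z f ∈ W p q := by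
  rw [mem_W] at *
  exact ⟨(degreeOf_tr_le _ _ _).trans hf.1, (degreeOf_tr_le _ _ _).trans hf.2⟩

lemma hmg_tr (e : ℂ) (z : Fin 2 → ℂ) {p q : ℕ} {f : A2} (hf : f ∈ W p q) :
    hmg e z p q (tr z f) = hmg e 0 p q f := by
  apply io_inj
  rw [io_hmg e z (tr_mem_W z hf), io_hmg e 0 hf, theta_tr]

lemma phi_hmg (e : ℂ) (p q : ℕ) (f : A2) : phi e (hmg e 0 p q f) = f := by
  conv_rhs => rw [f.as_sum]
  rw [hmg, map_sum]
  apply Finset.sum_congr rfl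
  intro s _
  rw [monomial_A2]
  simp [phi_x0, phi_y0, phi_lx, phi_ly]

lemma hmg_biform (e : ℂ) {p q : ℕ} {f : A2} (hf : f ∈ W p q) : IsBiForm (hmg e 0 p q f) p q := by
  have hX : ∀ k, IsBiForm (X (Sum.inl k)) 1 0 := fun k => isWeightedHomogeneous_X ℂ biWeight _
  have hY : ∀ k, IsBiForm (X (Sum.inr k)) 0 1 := fun k => isWeightedHomogeneous_X ℂ biWeight _
  have hlx : IsBiForm (lx e) 1 0 := (hX 1).sub ((hX 0).C_mul e)
  have hly : IsBiForm (ly e) 0 1 := (hY 1).sub ((hY 0).C_mul e)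
  unfold IsBiForm at *
  rw [← mem_weightedHomogeneousSubmodule, hmg]
  apply Submodule.sum_mem
  intro s hs
  have h1 : s 0 ≤ p := (hf hs).1
  have h2 : s 1 ≤ q := (hf hs).2
  rw [mem_weightedHomogeneousSubmodule]
  apply IsWeightedHomogeneous.C_mul
  simp only [Pi.zero_apply, C_0, zero_mul, sub_zero]
  have := (((hX 0).pow (s 0)).mul (hlx.pow (p - s 0))).mul
    (((hY 0).pow (s 1)).mul (hly.pow (q - s 1)))
  convert this using 1
  simp
  omega

lemma hmg_mem {e : ℂ} {P : ProjLine × ProjLine} (h1 : Good e P.1) (h2 : Good e P.2) {p q m : ℕ}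
    {f : A2} (hf : f ∈ W p q) (ho : (m : ℕ∞) ≤ ord (pt e P) f) :
    hmg e 0 p q f ∈ pointIdeal P ^ m := by
  rw [← hmg_tr e (pt e P) hf, hmg]
  apply Ideal.sum_mem
  intro s hs
  rw [le_ord_iff] at ho
  have hd : m ≤ s 0 + s 1 := by
    by_contra hlt
    apply mem_support_iff.mp hs
    apply ho
    rw [Finsupp.degree_eq_sum, Fin.sum_univ_two]
    omega
  apply Ideal.mul_mem_left
  have e1 := Ideal.pow_mem_pow (mem_pointIdeal_x (e := e) (P := P) h1) (s 0)
  have e2 := Ideal.pow_mem_pow (mem_pointIdeal_y (e := e) (P := P) h2) (s 1)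
  have e3 := Ideal.mul_mem_mul e1 e2
  rw [← pow_add] at e3
  have e4 := Ideal.pow_le_pow_right hd e3
  have e5 := Ideal.mul_mem_left _ (lx e ^ (p - s 0) * ly e ^ (q - s 1)) e4
  convert e5 using 1
  simp only [pt, Matrix.cons_val_zero, Matrix.cons_val_one]
  ring

/-- affine version of the degree set -/
def Sset (Z : Finset (Fin 2 → ℂ)) (m : ℕ) : Set ℕ :=
  {t | ∃ f : A2, f ≠ 0 ∧ f ∈ W t t ∧ ∀ z ∈ Z, (m : ℕ∞) ≤ ord z f}

open Classical in
lemma set_eq {e : ℂ} (Z : Finset (ProjLine × ProjLine))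
    (hg : ∀ P ∈ Z, Good e P.1 ∧ Good e P.2) (m : ℕ) :
    {t : ℕ | ∃ F ∈ symbPow Z m, F ≠ 0 ∧ IsBiForm F t t} = Sset (Z.image (pt e)) m := by
  ext t
  constructor
  · rintro ⟨F, hF, hF0, hFb⟩
    refine ⟨phi e F, phi_ne_zero e hFb hF0, phi_mem_W e hFb, ?_⟩
    intro z hz
    obtain ⟨P, hP, rfl⟩ := Finset.mem_image.mp hz
    simp only [symbPow, Ideal.mem_iInf] at hF
    exact ord_phi (hg P hP).1 (hg P hP).2 (hF P hP)
  · rintro ⟨f, hf0, hfW, hfo⟩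
    refine ⟨hmg e 0 t t f, ?_, ?_, hmg_biform e hfW⟩
    · simp only [symbPow, Ideal.mem_iInf]
      intro P hP
      exact hmg_mem (hg P hP).1 (hg P hP).2 hfW (hfo _ (Finset.mem_image_of_mem _ hP))
    · intro h
      have := phi_hmg e t t f
      rw [h, map_zero] at this
      exact hf0 this.symm

lemma Sset_nonempty (Z : Finset (Fin 2 → ℂ)) (m : ℕ) : (Sset Z m).Nonempty := by
  refine ⟨(∏ z ∈ Z, Ln 0 (z 0) ^ m).totalDegree, _, ?_,
    mem_W.mpr ⟨degreeOf_le_totalDegree _ _, degreeOf_le_totalDegree _ _⟩, ?_⟩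
  · rw [Finset.prod_ne_zero_iff]
    intro z _
    exact pow_ne_zero _ (Ln_ne_zero _ _)
  · intro z hz
    obtain ⟨E, hE⟩ := Finset.dvd_prod_of_mem (fun z : Fin 2 → ℂ => Ln 0 (z 0) ^ m) hz
    rw [hE, ord_mul, ord_pow]
    have h1 : 1 ≤ ord z (Ln 0 (z 0)) := by
      rw [one_le_ord_iff, eval_Ln, sub_self]
    calc (m : ℕ∞) = m * 1 := (mul_one _).symm
      _ ≤ m * ord z (Ln 0 (z 0)) := by gcongr
      _ ≤ _ := le_self_add

lemma affine_rect (Z : Finset (Fin 2 → ℂ)) (m : ℕ) (h : sInf (Sset Z m) = sInf (Sset Z (m + 1)))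
    {a b c d : ℂ} (h1 : ![a, b] ∈ Z) (h2 : ![c, d] ∈ Z) : ![a, d] ∈ Z := by
  obtain ⟨f, hf0, hfW, hfo⟩ := Nat.sInf_mem (Sset_nonempty Z (m + 1))
  rw [← h] at hfW
  rw [mem_W] at hfW
  have hdeg : ∀ i, degreeOf i f ≤ sInf (Sset Z m) := by
    intro i; fin_cases i
    exacts [hfW.1, hfW.2]
  rcases Nat.eq_zero_or_pos (sInf (Sset Z m)) with h0 | h0
  · exfalso
    have hu := isUnit_of_degreeOf hf0 (fun i => by have := hdeg i; omega)
    have h3 : eval ![a, b] f = 0 := by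
      rw [← one_le_ord_iff]
      refine le_trans ?_ (hfo _ h1)
      norm_cast
      omega
    exact (hu.map (eval ![a, b])).ne_zero h3
  · have hc : Crit Z m (sInf (Sset Z m)) f := ⟨h0, hf0, hdeg, hfo, by
      intro g hg0 hgd hgo
      have : sInf (Sset Z m) - 1 ∈ Sset Z m := ⟨g, hg0, mem_W.mpr ⟨hgd 0, hgd 1⟩, hgo⟩
      have := Nat.sInf_le this
      omega⟩
    have e1 := (hc.grid _).mp h1
    have e2 := (hc.grid _).mp h2
    exact (hc.grid _).mpr ⟨e1.1, e2.2⟩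

/-- If for the radical ideal `I` of a finite set `Z` of distinct points of `ℙ¹ × ℙ¹` one has
`α*(I^{(m)}) = α*(I^{(m+1)})` for some `m ≥ 1`, then `Z` is a grid: there are finite sets
`Z_V, Z_H ⊂ ℙ¹` with `Z = Z_V × Z_H`. -/
theorem grid_of_alphaStar_stable (Z : Finset (ProjLine × ProjLine)) (m : ℕ) (hm : 1 ≤ m)
    (h : alphaStar (symbPow Z m) = alphaStar (symbPow Z (m + 1))) :
    ∃ ZV ZH : Finset ProjLine, Z = ZV ×ˢ ZH := by
  classical
  obtain ⟨e, he⟩ := exists_good (Z.image Prod.fst ∪ Z.image Prod.snd)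
  have hg : ∀ P ∈ Z, Good e P.1 ∧ Good e P.2 := fun P hP =>
    ⟨he _ (Finset.mem_union_left _ (Finset.mem_image_of_mem _ hP)),
      he _ (Finset.mem_union_right _ (Finset.mem_image_of_mem _ hP))⟩
  unfold alphaStar at h
  rw [set_eq Z hg, set_eq Z hg] at h
  refine ⟨Z.image Prod.fst, Z.image Prod.snd, ?_⟩
  ext ⟨p, q⟩
  rw [Finset.mem_product]
  constructor
  · intro hP
    exact ⟨Finset.mem_image_of_mem Prod.fst hP, Finset.mem_image_of_mem Prod.snd hP⟩
  · rintro ⟨h1, h2⟩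
    obtain ⟨P, hP, hp⟩ := Finset.mem_image.mp h1
    obtain ⟨Q, hQ, hq⟩ := Finset.mem_image.mp h2
    simp only at hp hq
    subst hp hq
    have h3 := affine_rect _ m h (a := co e P.1) (b := co e P.2) (c := co e Q.1) (d := co e Q.2)
      (Finset.mem_image_of_mem (pt e) hP) (Finset.mem_image_of_mem (pt e) hQ)
    obtain ⟨S, hS, hSe⟩ := Finset.mem_image.mp h3
    have e0 := congrFun hSe 0
    have e1 := congrFun hSe 1
    simp only [pt, Matrix.cons_val_zero, Matrix.cons_val_one] at e0 e1
    have e0' := co_inj (hg S hS).1 (hg P hP).1 e0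
    have e1' := co_inj (hg S hS).2 (hg Q hQ).2 e1
    rw [← e0', ← e1']
    exact hS
end
end

section
/- Let Z be an (a,b)-grid in X = ℙ¹×ℙ¹ with 1 ≤ a ≤ b, let I be its radical ideal and f(Z;m) its jump function. Then a = f(Z;1), the set {j ≥ 1 : f(Z;j) < a} is nonempty, and for r = min{j : f(Z;j) < a} one has b = Σ_{i=1}^{r} f(Z;i). In particular the grid parameters (a,b) can be recovered from the jump function. -/
open MvPolynomial

noncomputable section

/-- The jump function `f(Z;m) = α*(I^{(m)}) - α*(I^{(m-1)})` for `m ≥ 1`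
(note `symbPow Z 0 = ⊤`, so the convention `α*(I^{(0)}) = 0` holds automatically). -/
def jumpFun (Z : Finset (ProjLine × ProjLine)) (m : ℕ) : ℤ :=
  (alphaStar (symbPow Z m) : ℤ) - (alphaStar (symbPow Z (m - 1)) : ℤ)

/-- The linear form vanishing at `v`, evaluated at `u`. -/
def lin (v : ProjLine) (u : Fin 2 → ℂ) : ℂ := v.rep 1 * u 0 - v.rep 0 * u 1

lemma rep_ne (v : ProjLine) : v.rep 0 ≠ 0 ∨ v.rep 1 ≠ 0 := by
  by_contra! h
  apply v.rep_nonzero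
  funext i
  fin_cases i
  · exact h.1
  · exact h.2

lemma det_ne (v v' : ProjLine) (h : v ≠ v') :
    v.rep 0 * v'.rep 1 - v.rep 1 * v'.rep 0 ≠ 0 := by
  intro h0
  apply h
  rw [← v.mk_rep, ← v'.mk_rep, Projectivization.mk_eq_mk_iff']
  rcases rep_ne v' with h1 | h1
  · refine ⟨v.rep 0 / v'.rep 0, ?_⟩
    funext i
    fin_cases i
    · simp [h1]
    · simp
      field_simp
      linear_combination h0
  · refine ⟨v.rep 1 / v'.rep 1, ?_⟩
    funext i
    fin_cases i
    · simp
      field_simp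
      linear_combination -h0
    · simp [h1]

lemma exists_dir (S : Finset ProjLine) (u : Fin 2 → ℂ) (hu : u 0 ≠ 0) :
    ∃ w : Fin 2 → ℂ, u 0 * w 1 - u 1 * w 0 ≠ 0 ∧ ∀ v ∈ S, lin v w ≠ 0 := by
  classical
  obtain ⟨c, hc⟩ := Infinite.exists_notMem_finset
    (insert (u 0 / u 1) (S.image fun v => v.rep 0 / v.rep 1))
  simp only [Finset.mem_insert, Finset.mem_image, not_or, not_exists, not_and] at hc
  refine ⟨![c, 1], ?_, ?_⟩
  · intro h
    simp at h
    by_cases h1 : u 1 = 0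
    · simp [h1, hu] at h
    · apply hc.1
      field_simp
      linear_combination -h
  · intro v hv h
    simp [lin] at h
    by_cases h1 : v.rep 1 = 0
    · rcases rep_ne v with h2 | h2
      · simp [h1, h2] at h
      · exact h2 h1
    · apply hc.2 v hv
      field_simp
      linear_combination -h

/-- The form `lin v` restricted to the line `u + T w`. -/
def linP (v : ProjLine) (u w : Fin 2 → ℂ) : Polynomial ℂ :=
  Polynomial.C (lin v w) * Polynomial.X + Polynomial.C (lin v u)

lemma linP_coprime (v v' : ProjLine) (h : v ≠ v') (u w : Fin 2 → ℂ)
    (hd : u 0 * w 1 - u 1 * w 0 ≠ 0) : IsCoprime (linP v u w) (linP v' u w) := by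
  have h1 := det_ne v v' h
  set e := (v.rep 0 * v'.rep 1 - v.rep 1 * v'.rep 0) * (u 0 * w 1 - u 1 * w 0) with he
  have he0 : e ≠ 0 := mul_ne_zero h1 hd
  refine ⟨Polynomial.C (e⁻¹ * lin v' w), Polynomial.C (e⁻¹ * (-lin v w)), ?_⟩
  have : Polynomial.C (e⁻¹ * e) = (1 : Polynomial ℂ) := by
    rw [inv_mul_cancel₀ he0, Polynomial.C_1]
  rw [← this, he]
  simp only [linP, lin, Polynomial.C_mul, Polynomial.C_sub, Polynomial.C_neg]
  ring

lemma uni_zero (S : Finset ProjLine) (u w : Fin 2 → ℂ)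
    (hd : u 0 * w 1 - u 1 * w 0 ≠ 0) (hw : ∀ v ∈ S, lin v w ≠ 0) (m p : ℕ)
    (hp : p < S.card * m) (f : Polynomial ℂ) (hf : f.natDegree ≤ p)
    (hdvd : ∀ v ∈ S, linP v u w ^ m ∣ f) : f = 0 := by
  by_contra hf0
  have h1 : ∏ v ∈ S, linP v u w ^ m ∣ f := by
    apply Finset.prod_dvd_of_coprime
    · intro v _ v' _ hvv
      exact (linP_coprime v v' hvv u w hd).pow
    · exact hdvd
  have h2 := Polynomial.natDegree_le_of_dvd h1 hf0
  have h3 : (∏ v ∈ S, linP v u w ^ m).natDegree = S.card * m := by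
    rw [Polynomial.natDegree_prod]
    · rw [Finset.sum_congr rfl (g := fun _ => m)]
      · simp
      · intro v hv
        rw [Polynomial.natDegree_pow, linP, Polynomial.natDegree_linear (hw v hv), mul_one]
    · intro v hv
      apply pow_ne_zero
      intro h0
      have := Polynomial.natDegree_linear (a := lin v w) (b := lin v u) (hw v hv)
      rw [linP] at h0
      rw [h0] at this
      simp at this
  omega

lemma natDegree_aeval (F : R4) (p q d e : ℕ) (hF : IsBiForm F p q)
    (g g' : Fin 2 → Polynomial ℂ) (hg : ∀ i, (g i).natDegree ≤ d)
    (hg' : ∀ i, (g' i).natDegree ≤ e) :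
    (aeval (Sum.elim g g') F).natDegree ≤ p * d + q * e := by
  rw [aeval_def, eval₂_eq']
  apply Polynomial.natDegree_sum_le_of_forall_le
  intro s hs
  have hw := hF (mem_support_iff.mp hs)
  rw [Finsupp.weight_apply, Finsupp.sum_fintype _ _ (by simp)] at hw
  simp only [Fintype.sum_sum_type, biWeight, Fin.sum_univ_two, Sum.elim_inl, Sum.elim_inr,
    Prod.smul_mk, smul_eq_mul, mul_one, mul_zero, Prod.mk_add_mk, add_zero, zero_add,
    Prod.mk.injEq] at hw
  obtain ⟨rfl, rfl⟩ := hw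
  refine (Polynomial.natDegree_C_mul_le _ _).trans ?_
  simp only [Fintype.prod_sum_type, Fin.prod_univ_two, Sum.elim_inl, Sum.elim_inr]
  have k : ∀ (r : Polynomial ℂ) (n c : ℕ), r.natDegree ≤ c → (r ^ n).natDegree ≤ n * c :=
    fun r n c h => Polynomial.natDegree_pow_le.trans (Nat.mul_le_mul_left _ h)
  refine Polynomial.natDegree_mul_le.trans ?_
  refine (add_le_add Polynomial.natDegree_mul_le Polynomial.natDegree_mul_le).trans ?_
  have := k _ (s (Sum.inl 0)) _ (hg 0)
  have := k _ (s (Sum.inl 1)) _ (hg 1)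
  have := k _ (s (Sum.inr 0)) _ (hg' 0)
  have := k _ (s (Sum.inr 1)) _ (hg' 1)
  rw [add_mul, add_mul]
  omega

/-- Parametrized line. -/
def lineP (u w : Fin 2 → ℂ) (i : Fin 2) : Polynomial ℂ :=
  Polynomial.C (w i) * Polynomial.X + Polynomial.C (u i)

lemma eval_aeval (F : R4) (g g' : Fin 2 → Polynomial ℂ) (t : ℂ) :
    (aeval (Sum.elim g g') F).eval t =
      eval (Sum.elim (fun i => (g i).eval t) (fun i => (g' i).eval t)) F := by
  rw [← Polynomial.coe_evalRingHom, aeval_def, hom_eval₂, eval, coe_eval₂Hom]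
  congr 1
  · ext x
    simp
  · funext i
    cases i <;> simp

lemma vanish_line (ZV ZH : Finset ProjLine) (m p q : ℕ) (F : R4)
    (hF : F ∈ symbPow (ZV ×ˢ ZH) m) (hb : IsBiForm F p q) (hp : p < ZV.card * m)
    (u y : Fin 2 → ℂ) (hu : u 0 ≠ 0) (h : ProjLine) (hh : h ∈ ZH) (hy : lin h y = 0) :
    eval (Sum.elim u y) F = 0 := by
  obtain ⟨w, hd, hw⟩ := exists_dir ZV u hu
  have key := uni_zero ZV u w hd hw m p hp
    (aeval (Sum.elim (lineP u w) (fun i => Polynomial.C (y i))) F) (by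
      have := natDegree_aeval F p q 1 0 hb (lineP u w) (fun i => Polynomial.C (y i))
        (fun i => Polynomial.natDegree_linear_le) (fun i => by simp)
      simpa using this) (by
      intro v hv
      have hmem : F ∈ pointIdeal (v, h) ^ m := by
        simp only [symbPow, Ideal.mem_iInf] at hF
        exact hF (v, h) (Finset.mk_mem_product hv hh)
      have h1 := Ideal.mem_map_of_mem
        (aeval (R := ℂ) (Sum.elim (lineP u w) (fun i => Polynomial.C (y i)))) hmem
      rw [Ideal.map_pow] at h1
      have h2 : (pointIdeal (v, h)).map
          (aeval (R := ℂ) (Sum.elim (lineP u w) (fun i => Polynomial.C (y i)))) ≤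
          Ideal.span {linP v u w} := by
        rw [pointIdeal, Ideal.map_span, Ideal.span_le]
        rintro _ ⟨G, hG, rfl⟩
        rw [SetLike.mem_coe, Ideal.mem_span_singleton]
        rcases hG with rfl | hG
        · apply dvd_of_eq
          simp [linP, lineP, lin]
          ring
        · rw [Set.mem_singleton_iff.mp hG]
          have : (0 : Polynomial ℂ) = Polynomial.C (lin h y) := by rw [hy]; simp
          have h3 : aeval (R := ℂ) (Sum.elim (lineP u w) (fun i => Polynomial.C (y i)))
            (C (h.rep 1) * X (Sum.inr 0) - C (h.rep 0) * X (Sum.inr 1)) = 0 := by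
            rw [this]
            simp [lin]
          rw [h3]
          exact dvd_zero _
      have h4 := Ideal.pow_right_mono h2 m h1
      rwa [Ideal.span_singleton_pow, Ideal.mem_span_singleton] at h4)
  have h5 := congrArg (Polynomial.eval 0) key
  rw [eval_aeval] at h5
  simpa [lineP] using h5

lemma form_zero (ZV ZH : Finset ProjLine) (m p q : ℕ) (F : R4)
    (hF : F ∈ symbPow (ZV ×ˢ ZH) m) (hb : IsBiForm F p q) (hp : p < ZV.card * m)
    (hq : q < ZH.card) : F = 0 := by
  by_contra hF0
  have hne : F * X (Sum.inl 0) * X (Sum.inr 0) ≠ 0 :=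
    mul_ne_zero (mul_ne_zero hF0 (X_ne_zero _)) (X_ne_zero _)
  obtain ⟨z, hz⟩ : ∃ z, eval z (F * X (Sum.inl 0) * X (Sum.inr 0)) ≠ 0 := by
    by_contra! hcon
    exact hne (MvPolynomial.funext fun z => by rw [hcon z, map_zero])
  simp only [map_mul, eval_X] at hz
  have hz2 := right_ne_zero_of_mul hz
  have hz1 := right_ne_zero_of_mul (left_ne_zero_of_mul hz)
  have hz0 := left_ne_zero_of_mul (left_ne_zero_of_mul hz)
  set u : Fin 2 → ℂ := fun i => z (Sum.inl i) with hu
  set y : Fin 2 → ℂ := fun i => z (Sum.inr i) with hy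
  have hzz : z = Sum.elim u y := by
    funext i
    cases i <;> rfl
  obtain ⟨w, hd, hw⟩ := exists_dir ZH y hz2
  have key := uni_zero ZH y w hd hw 1 q (by omega)
    (aeval (Sum.elim (fun i => Polynomial.C (u i)) (lineP y w)) F) (by
      have := natDegree_aeval F p q 0 1 hb (fun i => Polynomial.C (u i)) (lineP y w)
        (fun i => by simp) (fun i => Polynomial.natDegree_linear_le)
      simpa using this) (by
      intro h hh
      have hw0 := hw h hh
      have h1 : linP h y w = Polynomial.C (lin h w) *
          (Polynomial.X - Polynomial.C (-(lin h y) / lin h w)) := by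
        rw [mul_sub, ← Polynomial.C_mul, mul_div_cancel₀ _ hw0, linP]
        simp
      rw [pow_one, h1, (Polynomial.isUnit_C.mpr hw0.isUnit).mul_left_dvd,
        Polynomial.dvd_iff_isRoot, Polynomial.IsRoot, eval_aeval]
      simp only [Polynomial.eval_C]
      apply vanish_line ZV ZH m p q F hF hb hp u _ hz1 h hh
      simp only [lineP, lin, Polynomial.eval_add, Polynomial.eval_mul, Polynomial.eval_C,
        Polynomial.eval_X]
      simp only [lin] at hw0
      field_simp
      ring)
  have h5 := congrArg (Polynomial.eval 0) key
  rw [eval_aeval] at h5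
  apply hz0
  rw [hzz]
  simpa [lineP] using h5

/-- The vertical linear form of a point. -/
def formV (v : ProjLine) : R4 := C (v.rep 1) * X (Sum.inl 0) - C (v.rep 0) * X (Sum.inl 1)

/-- The horizontal linear form of a point. -/
def formH (v : ProjLine) : R4 := C (v.rep 1) * X (Sum.inr 0) - C (v.rep 0) * X (Sum.inr 1)

lemma formV_ne (v : ProjLine) : formV v ≠ 0 := by
  intro h
  have h1 := congrArg (eval (Sum.elim ![1, 0] ![0, 0])) h
  have h2 := congrArg (eval (Sum.elim ![0, 1] ![0, 0])) h
  simp [formV] at h1 h2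
  rcases rep_ne v with h3 | h3 <;> contradiction

lemma formH_ne (v : ProjLine) : formH v ≠ 0 := by
  intro h
  have h1 := congrArg (eval (Sum.elim ![0, 0] ![1, 0])) h
  have h2 := congrArg (eval (Sum.elim ![0, 0] ![0, 1])) h
  simp [formH] at h1 h2
  rcases rep_ne v with h3 | h3 <;> contradiction

lemma bi_X (i : Fin 2 ⊕ Fin 2) (c : ℂ) : IsWeightedHomogeneous biWeight (C c * X i) (biWeight i) := by
  have := (isWeightedHomogeneous_C biWeight c).mul (isWeightedHomogeneous_X ℂ biWeight i)
  rwa [zero_add] at this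

lemma bi_sub {F G : R4} {n : ℕ × ℕ} (hF : IsWeightedHomogeneous biWeight F n)
    (hG : IsWeightedHomogeneous biWeight G n) : IsWeightedHomogeneous biWeight (F - G) n :=
  (weightedHomogeneousSubmodule ℂ biWeight n).sub_mem hF hG

lemma formV_bi (v : ProjLine) : IsWeightedHomogeneous biWeight (formV v) (1, 0) :=
  bi_sub (bi_X _ _) (bi_X _ _)

lemma formH_bi (v : ProjLine) : IsWeightedHomogeneous biWeight (formH v) (0, 1) :=
  bi_sub (bi_X _ _) (bi_X _ _)

lemma exists_form (ZV ZH : Finset ProjLine) (i j t : ℕ) (hi : ZV.card * i ≤ t)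
    (hj : ZH.card * j ≤ t) :
    ∃ F ∈ symbPow (ZV ×ˢ ZH) (i + j), F ≠ 0 ∧ IsBiForm F t t := by
  refine ⟨((∏ v ∈ ZV, formV v) ^ i * (∏ v ∈ ZH, formH v) ^ j) *
    (X (Sum.inl 0) ^ (t - ZV.card * i) * X (Sum.inr 0) ^ (t - ZH.card * j)), ?_, ?_, ?_⟩
  · simp only [symbPow, Ideal.mem_iInf]
    rintro ⟨v, h⟩ hP
    obtain ⟨hv, hh⟩ := Finset.mem_product.mp hP
    apply Ideal.mul_mem_right
    rw [pow_add]
    apply Ideal.mul_mem_mul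
    · apply Ideal.pow_mem_pow
      apply Ideal.mem_of_dvd _ (Finset.dvd_prod_of_mem formV hv)
      exact Ideal.subset_span (Or.inl rfl)
    · apply Ideal.pow_mem_pow
      apply Ideal.mem_of_dvd _ (Finset.dvd_prod_of_mem formH hh)
      exact Ideal.subset_span (Or.inr rfl)
  · refine mul_ne_zero (mul_ne_zero (pow_ne_zero _ ?_) (pow_ne_zero _ ?_))
      (mul_ne_zero (pow_ne_zero _ (X_ne_zero _)) (pow_ne_zero _ (X_ne_zero _)))
    · exact Finset.prod_ne_zero_iff.mpr fun v _ => formV_ne v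
    · exact Finset.prod_ne_zero_iff.mpr fun v _ => formH_ne v
  · have h1 := IsWeightedHomogeneous.prod ZV formV (fun _ => (1, 0)) (w := biWeight)
      (fun v _ => formV_bi v)
    have h2 := IsWeightedHomogeneous.prod ZH formH (fun _ => (0, 1)) (w := biWeight)
      (fun v _ => formH_bi v)
    have h3 := ((h1.pow i).mul (h2.pow j)).mul
      (((isWeightedHomogeneous_X ℂ biWeight (Sum.inl 0)).pow (t - ZV.card * i)).mul
      ((isWeightedHomogeneous_X ℂ biWeight (Sum.inr 0)).pow (t - ZH.card * j)))
    unfold IsBiForm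
    convert h3 using 1
    simp only [biWeight, Finset.sum_const, Sum.elim_inl, Sum.elim_inr]
    ext
    · simp
      rw [mul_comm i]
      omega
    · simp
      rw [mul_comm j]
      omega

lemma alpha_eq (ZV ZH : Finset ProjLine) (m : ℕ) (hm : ZV.card * (m - 1) ≤ ZH.card) :
    alphaStar (symbPow (ZV ×ˢ ZH) m) = min (ZV.card * m) ZH.card := by
  have hmem : min (ZV.card * m) ZH.card ∈
      {t : ℕ | ∃ F ∈ symbPow (ZV ×ˢ ZH) m, F ≠ 0 ∧ IsBiForm F t t} := by
    rcases le_total (ZV.card * m) ZH.card with h | h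
    · rw [min_eq_left h]
      exact exists_form ZV ZH m 0 _ le_rfl (by simp)
    · rw [min_eq_right h]
      rcases m with _ | m
      · have h0 : ZH.card = 0 := by simpa using h
        have := exists_form ZV ZH 0 0 ZH.card (by simp) (by simp)
        exact this
      · exact exists_form ZV ZH m 1 _ (by simpa using hm) (by simp)
  apply le_antisymm
  · exact Nat.sInf_le hmem
  · obtain ⟨F, hF, hF0, hb⟩ := Nat.sInf_mem ⟨_, hmem⟩
    by_contra! hlt
    have hlt2 := lt_min_iff.mp hlt
    exact hF0 (form_zero ZV ZH m _ _ F hF hb hlt2.1 hlt2.2)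

/-- A grid can be recovered from its jump function: for an `(a,b)`-grid `Z = Z_V × Z_H` in
`ℙ¹ × ℙ¹` with `1 ≤ a ≤ b`, one has `a = f(Z;1)`, the set `{j ≥ 1 : f(Z;j) < a}` is
nonempty, and for `r = min{j ≥ 1 : f(Z;j) < a}` one has `b = ∑_{i=1}^r f(Z;i)`. -/
theorem grid_recovered_from_jumpFun (a b : ℕ) (ha : 1 ≤ a) (hab : a ≤ b)
    (ZV ZH : Finset ProjLine) (hV : ZV.card = a) (hH : ZH.card = b) :
    jumpFun (ZV ×ˢ ZH) 1 = (a : ℤ) ∧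
    {j : ℕ | 1 ≤ j ∧ jumpFun (ZV ×ˢ ZH) j < (a : ℤ)}.Nonempty ∧
    (b : ℤ) =
      ∑ i ∈ Finset.Icc 1 (sInf {j : ℕ | 1 ≤ j ∧ jumpFun (ZV ×ˢ ZH) j < (a : ℤ)}),
        jumpFun (ZV ×ˢ ZH) i := by
  subst hV hH
  set a := ZV.card with ha'
  set b := ZH.card with hb'
  have hA : ∀ m, a * (m - 1) ≤ b → alphaStar (symbPow (ZV ×ˢ ZH) m) = min (a * m) b :=
    fun m hm => alpha_eq ZV ZH m hm
  have hsmall : ∀ j, 1 ≤ j → j ≤ b / a → jumpFun (ZV ×ˢ ZH) j = a := by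
    intro j h1 h2
    obtain ⟨j, rfl⟩ : ∃ k, j = k + 1 := ⟨j - 1, by omega⟩
    have h3 : a * (j + 1) ≤ b := (Nat.mul_le_mul_left a h2).trans (Nat.mul_div_le b a)
    have h4 : a * j ≤ b := le_trans (Nat.mul_le_mul_left a (Nat.le_succ j)) h3
    have h5 : a * (j - 1) ≤ b := le_trans (Nat.mul_le_mul_left a (Nat.sub_le j 1)) h4
    rw [jumpFun, Nat.add_sub_cancel, hA _ h4, hA _ h5, min_eq_left h3, min_eq_left h4]
    push_cast
    ring
  have hq : a * (b / a) ≤ b := Nat.mul_div_le b a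
  have hlt : b < a * (b / a + 1) := Nat.lt_mul_div_succ b ha
  have hq1 : 1 ≤ b / a := (Nat.one_le_div_iff ha).mpr hab
  have hr : alphaStar (symbPow (ZV ×ˢ ZH) (b / a + 1)) = b := by
    rw [hA _ hq, min_eq_right hlt.le]
  have hr' : alphaStar (symbPow (ZV ×ˢ ZH) (b / a)) = a * (b / a) := by
    rw [hA _ (le_trans (Nat.mul_le_mul_left a (Nat.sub_le _ 1)) hq), min_eq_left hq]
  have hmem : b / a + 1 ∈ {j : ℕ | 1 ≤ j ∧ jumpFun (ZV ×ˢ ZH) j < (a : ℤ)} := by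
    refine ⟨by omega, ?_⟩
    rw [jumpFun, Nat.add_sub_cancel, hr, hr']
    have : (b : ℤ) < (a * (b / a + 1) : ℕ) := by exact_mod_cast hlt
    rw [Nat.mul_add, mul_one, Nat.cast_add] at this
    linarith
  have hinf : sInf {j : ℕ | 1 ≤ j ∧ jumpFun (ZV ×ˢ ZH) j < (a : ℤ)} = b / a + 1 := by
    apply le_antisymm (Nat.sInf_le hmem)
    obtain ⟨h1, h2⟩ := Nat.sInf_mem ⟨_, hmem⟩
    by_contra! h3
    rw [hsmall _ h1 (by omega)] at h2
    exact lt_irrefl _ h2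
  refine ⟨hsmall 1 le_rfl hq1, ⟨_, hmem⟩, ?_⟩
  rw [hinf]
  have tel : ∀ n : ℕ, ∑ i ∈ Finset.Icc 1 n, jumpFun (ZV ×ˢ ZH) i =
      (alphaStar (symbPow (ZV ×ˢ ZH) n) : ℤ) - alphaStar (symbPow (ZV ×ˢ ZH) 0) := by
    intro n
    induction n with
    | zero => simp
    | succ n ih =>
      rw [Finset.sum_Icc_succ_top (by omega), ih, jumpFun, Nat.add_sub_cancel]
      ring
  rw [tel, hr, hA 0 (by simp)]
  simp
end
end
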